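/- arXiv:2309.07977 — 3 statements merged into one kernel-verified Lean document; each statement's English description precedes it below -/
import Mathlib

section
/- There exist a constant C > 0 and an integer L such that the following holds for every integer l ≥ L: if a ∈ (1/2, 1) and μ > 0 are such that the Neumann problem ψ''(r) + ψ'(r)/r + μψ(r) = 0 on (a,1) with ψ'(a) = ψ'(1) = 0 has a nonconstant C² solution with exactly two zeros in (a,1), and the Dirichlet problem φ''(r) + φ'(r)/r − l²φ(r)/r² + μφ(r) = 0 on (a,1) with φ(a) = φ(1) = 0 has a C² solution which is positive on (a,1), then |a − (1 − √3·π/l + 3π²/(2l²))| ≤ C/l³. -/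
open Set Real

/-- `μ` is the second nontrivial radial Neumann eigenvalue of the annulus
`{a < |x| < 1}`: the radial Neumann problem has a nonconstant `C²` solution with exactly
two zeros in `(a,1)`. -/
def NeumannMu02 (a μ : ℝ) : Prop :=
  ∃ ψ : ℝ → ℝ, ContDiffOn ℝ 2 ψ (Set.Icc a 1) ∧
    (∀ r ∈ Set.Ioo a 1, deriv (deriv ψ) r + deriv ψ r / r + μ * ψ r = 0) ∧
    derivWithin ψ (Set.Icc a 1) a = 0 ∧ derivWithin ψ (Set.Icc a 1) 1 = 0 ∧
    (∃ r ∈ Set.Icc a 1, ψ r ≠ ψ a) ∧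
    {r ∈ Set.Ioo a 1 | ψ r = 0}.encard = 2

/-- `μ` is the first `l`-mode Dirichlet eigenvalue of the annulus `{a < |x| < 1}`:
the `l`-mode Dirichlet problem has a `C²` solution positive on `(a,1)`. -/
def DirichletLam0 (a μ : ℝ) (l : ℕ) : Prop :=
  ∃ φ : ℝ → ℝ, ContDiffOn ℝ 2 φ (Set.Icc a 1) ∧
    (∀ r ∈ Set.Ioo a 1, deriv (deriv φ) r + deriv φ r / r
      - (l:ℝ)^2 * φ r / r^2 + μ * φ r = 0) ∧
    φ a = 0 ∧ φ 1 = 0 ∧ (∀ r ∈ Set.Ioo a 1, 0 < φ r)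

/-!
Let `k = π / (1 - a)`. If solutions of `u'' + P u = 0` and `w'' + Q w = 0` both vanish at the ends
of an interval and nowhere inside, then `P = Q` somewhere inside, by Rolle's theorem for their
Wronskian. After Liouville's transformation this is applied to the radial equations and to the
explicit functions `sin ρ / √ρ'`.

On the Neumann side, `ψ'` solves the radial equation of angular mode `1` and has exactly one zero in
`(a, 1)`; comparison with sines on the two resulting intervals gives `μ = 4 k² + O(1)`. On the
Dirichlet side, a quadratic phase `ρ` gives `μ = k² + l² (1 + (1 - a)) + O(1)`. At a crossing point
`3 k² = l² (1 + (1 - a)) + O(1)`, and this is solved for `a` by taking square roots.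
-/

/-- `u` solves the linear equation `u'' + c u' + P u = 0` on `(a, b)`, written as a first order
system in `u` and `v = u'`, both continuous up to the end points. The radial equations of an
annulus have `c = r⁻¹`; equations in normal form have `c = 0`. -/
structure IsSolutionOn (c P u v : ℝ → ℝ) (a b : ℝ) : Prop where
  continuousOn : ContinuousOn u (Icc a b)
  continuousOn_deriv : ContinuousOn v (Icc a b)
  hasDerivAt : ∀ r ∈ Ioo a b, HasDerivAt u (v r) r
  hasDerivAt_deriv : ∀ r ∈ Ioo a b, HasDerivAt v (-(c r * v r) - P r * u r) r

/-- `[a, b]` is the closure of a nodal domain of `u`: consecutive zeros of `u` are at `a`, `b`. -/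
structure IsNodalInterval (u : ℝ → ℝ) (a b : ℝ) : Prop where
  left : u a = 0
  right : u b = 0
  ne_zero : ∀ r ∈ Ioo a b, u r ≠ 0

namespace IsSolutionOn

variable {a b : ℝ} {c P Q u v w z : ℝ → ℝ}

lemma mono {x y : ℝ} (hu : IsSolutionOn c P u v a b) (hx : a ≤ x) (hy : y ≤ b) :
    IsSolutionOn c P u v x y where
  continuousOn := hu.continuousOn.mono (Icc_subset_Icc hx hy)
  continuousOn_deriv := hu.continuousOn_deriv.mono (Icc_subset_Icc hx hy)
  hasDerivAt r hr := hu.hasDerivAt r (Ioo_subset_Ioo hx hy hr)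
  hasDerivAt_deriv r hr := hu.hasDerivAt_deriv r (Ioo_subset_Ioo hx hy hr)

lemma of_contDiffOn (hab : a < b) (hu : ContDiffOn ℝ 2 u (Icc a b))
    (hode : ∀ r ∈ Ioo a b, deriv (deriv u) r + c r * deriv u r + P r * u r = 0) :
    IsSolutionOn c P u (derivWithin u (Icc a b)) a b := by
  set v := derivWithin u (Icc a b)
  have hv : ContDiffOn ℝ 1 v (Icc a b) := hu.derivWithin (uniqueDiffOn_Icc hab) (by norm_num)
  have hasDerivAt_within : ∀ {f : ℝ → ℝ}, DifferentiableOn ℝ f (Icc a b) → ∀ r ∈ Ioo a b,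
      HasDerivAt f (derivWithin f (Icc a b) r) r := fun hf r hr =>
    (hf r (Ioo_subset_Icc_self hr)).hasDerivWithinAt.hasDerivAt (Icc_mem_nhds hr.1 hr.2)
  have hasDerivAt_u := hasDerivAt_within (hu.differentiableOn two_ne_zero)
  have hasDerivAt_v := hasDerivAt_within (hv.differentiableOn one_ne_zero)
  refine ⟨hu.continuousOn, hv.continuousOn, hasDerivAt_u, fun r hr => ?_⟩
  have deriv_eventuallyEq : deriv u =ᶠ[nhds r] v := by
    filter_upwards [Ioo_mem_nhds hr.1 hr.2] with x hx using (hasDerivAt_u x hx).deriv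
  refine (hasDerivAt_v r hr).congr_deriv ?_
  have ode := hode r hr
  rw [deriv_eventuallyEq.deriv_eq, (hasDerivAt_v r hr).deriv, (hasDerivAt_u r hr).deriv] at ode
  linear_combination ode

/-- Rolle's theorem for the Wronskian `v w - u z`, whose derivative is `(Q - P) u w`. -/
lemma exists_coeff_eq (hab : a < b) (hu : IsSolutionOn 0 P u v a b)
    (hw : IsSolutionOn 0 Q w z a b) (nu : IsNodalInterval u a b) (nw : IsNodalInterval w a b) :
    ∃ r ∈ Ioo a b, P r = Q r := by
  obtain ⟨r, hr, wronskian_deriv⟩ := exists_hasDerivAt_eq_zero (f := fun r => v r * w r - u r * z r)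
    hab ((hu.continuousOn_deriv.mul hw.continuousOn).sub
      (hu.continuousOn.mul hw.continuousOn_deriv))
    (by simp [nu.left, nu.right, nw.left, nw.right])
    (fun r hr => ((hu.hasDerivAt_deriv r hr).mul (hw.hasDerivAt r hr)).sub
      ((hu.hasDerivAt r hr).mul (hw.hasDerivAt_deriv r hr)))
  simp only [Pi.zero_apply] at wronskian_deriv
  have factored : (Q r - P r) * (u r * w r) = 0 := by linear_combination wronskian_deriv
  have coeff_sub : Q r - P r = 0 :=
    (mul_eq_zero.1 factored).resolve_right (mul_ne_zero (nu.ne_zero r hr) (nw.ne_zero r hr))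
  exact ⟨r, hr, by linarith⟩

lemma liouville_transform (ha : 0 < a) (hu : IsSolutionOn (fun r => r⁻¹) P u v a b) :
    IsSolutionOn 0 (fun r => P r + 1 / (4 * r ^ 2)) (fun r => √r * u r)
      (fun r => u r / (2 * √r) + √r * v r) a b := by
  have pos : ∀ r ∈ Icc a b, 0 < r := fun r hr => ha.trans_le hr.1
  have sqrt_ne : ∀ r ∈ Icc a b, √r ≠ 0 := fun r hr => (sqrt_pos.2 (pos r hr)).ne'
  have hasDerivAt_sqrt : ∀ r ∈ Ioo a b, HasDerivAt (fun r => √r) (1 / (2 * √r)) r := fun r hr =>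
    (hasDerivAt_id r).sqrt (pos r (Ioo_subset_Icc_self hr)).ne'
  have sqrt_cont : ContinuousOn (fun r : ℝ => √r) (Icc a b) := by fun_prop
  refine ⟨sqrt_cont.mul hu.continuousOn, (hu.continuousOn.div (sqrt_cont.const_mul 2)
    fun r hr => mul_ne_zero two_ne_zero (sqrt_ne r hr)).add (sqrt_cont.mul hu.continuousOn_deriv),
    fun r hr => ?_, fun r hr => ?_⟩
  · refine ((hasDerivAt_sqrt r hr).mul (hu.hasDerivAt r hr)).congr_deriv ?_
    ring
  · have hs := sqrt_ne r (Ioo_subset_Icc_self hr)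
    refine (((hu.hasDerivAt r hr).div ((hasDerivAt_sqrt r hr).const_mul 2)
      (mul_ne_zero two_ne_zero hs)).add
      ((hasDerivAt_sqrt r hr).mul (hu.hasDerivAt_deriv r hr))).congr_deriv ?_
    have sq : r = √r ^ 2 := (sq_sqrt (pos r (Ioo_subset_Icc_self hr)).le).symm
    simp only [Pi.zero_apply]
    generalize u r = y
    generalize v r = y'
    generalize P r = p
    generalize √r = s at *
    subst sq
    field_simp
    ring

end IsSolutionOn

section Phase

variable {a b : ℝ} {ρ ω ω' ω'' : ℝ → ℝ}

/-- With the amplitude `ω ^ (-1 / 2)`, the terms in `cos ρ` cancel in the second derivative. -/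
lemma isSolutionOn_sin_phase_div_sqrt (hω : ∀ r ∈ Icc a b, 0 < ω r)
    (hρ : ∀ r ∈ Icc a b, HasDerivAt ρ (ω r) r) (hω' : ∀ r ∈ Icc a b, HasDerivAt ω (ω' r) r)
    (hω'' : ∀ r ∈ Icc a b, HasDerivAt ω' (ω'' r) r) :
    IsSolutionOn 0 (fun r => ω r ^ 2 + ω'' r / (2 * ω r) - 3 / 4 * (ω' r / ω r) ^ 2)
      (fun r => sin (ρ r) / √(ω r))
      (fun r => √(ω r) * cos (ρ r) - ω' r * sin (ρ r) / (2 * √(ω r) ^ 3)) a b := by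
  have sqrt_ne : ∀ r ∈ Icc a b, √(ω r) ≠ 0 := fun r hr => (sqrt_pos.2 (hω r hr)).ne'
  have hasDerivAt_sqrt : ∀ r ∈ Icc a b, HasDerivAt (fun r => √(ω r)) (ω' r / (2 * √(ω r))) r :=
    fun r hr => (hω' r hr).sqrt (hω r hr).ne'
  have first : ∀ r ∈ Icc a b, HasDerivAt (fun r => sin (ρ r) / √(ω r))
      (√(ω r) * cos (ρ r) - ω' r * sin (ρ r) / (2 * √(ω r) ^ 3)) r := by
    intro r hr
    have hs := sqrt_ne r hr
    have sq : ω r = √(ω r) ^ 2 := (sq_sqrt (hω r hr).le).symm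
    refine ((hρ r hr).sin.div (hasDerivAt_sqrt r hr) hs).congr_deriv ?_
    generalize √(ω r) = s at *
    rw [sq]
    field_simp
  have second : ∀ r ∈ Icc a b, HasDerivAt
      (fun r => √(ω r) * cos (ρ r) - ω' r * sin (ρ r) / (2 * √(ω r) ^ 3))
      (-((ω r ^ 2 + ω'' r / (2 * ω r) - 3 / 4 * (ω' r / ω r) ^ 2) * (sin (ρ r) / √(ω r)))) r := by
    intro r hr
    have hs := sqrt_ne r hr
    have sq : ω r = √(ω r) ^ 2 := (sq_sqrt (hω r hr).le).symm
    refine (((hasDerivAt_sqrt r hr).mul (hρ r hr).cos).sub (((hω'' r hr).mul (hρ r hr).sin).div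
      (((hasDerivAt_sqrt r hr).pow 3).const_mul 2)
      (mul_ne_zero two_ne_zero (pow_ne_zero 3 hs)))).congr_deriv ?_
    simp only [Pi.pow_apply, Pi.mul_apply]
    generalize √(ω r) = s at *
    rw [sq]
    field_simp
    push_cast
    ring
  exact ⟨fun r hr => (first r hr).continuousAt.continuousWithinAt,
    fun r hr => (second r hr).continuousAt.continuousWithinAt,
    fun r hr => first r (Ioo_subset_Icc_self hr),
    fun r hr => (second r (Ioo_subset_Icc_self hr)).congr_deriv (by simp)⟩

lemma isNodalInterval_sin_phase_div_sqrt (hab : a ≤ b) (hω : ∀ r ∈ Icc a b, 0 < ω r)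
    (hρ : ∀ r ∈ Icc a b, HasDerivAt ρ (ω r) r) (ρ_left : ρ a = 0) (ρ_right : ρ b = π) :
    IsNodalInterval (fun r => sin (ρ r) / √(ω r)) a b := by
  have ρ_mono : StrictMonoOn ρ (Icc a b) := by
    refine strictMonoOn_of_deriv_pos (convex_Icc a b)
      (fun r hr => (hρ r hr).continuousAt.continuousWithinAt) fun r hr => ?_
    have hr' := interior_subset hr
    exact (hρ r hr').deriv ▸ hω r hr'
  refine ⟨by simp [ρ_left], by simp [ρ_right], fun r hr => ?_⟩
  have hr' := Ioo_subset_Icc_self hr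
  have ρ_pos : 0 < ρ r := ρ_left ▸ ρ_mono (left_mem_Icc.2 hab) hr' hr.1
  have ρ_lt_pi : ρ r < π := ρ_right ▸ ρ_mono hr' (right_mem_Icc.2 hab) hr.2
  exact div_ne_zero (sin_pos_of_pos_of_lt_pi ρ_pos ρ_lt_pi).ne' (sqrt_pos.2 (hω r hr')).ne'

lemma one_add_mul_sub_midpoint_pos {β r : ℝ} (hβ : |β| * (b - a) < 2) (hr : r ∈ Icc a b) :
    0 < 1 + β * (r - (a + b) / 2) := by
  have dist_midpoint : |r - (a + b) / 2| ≤ (b - a) / 2 :=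
    abs_le.2 ⟨by linarith [hr.1], by linarith [hr.2]⟩
  have abs_lt_one : |β * (r - (a + b) / 2)| < 1 := by
    rw [abs_mul]
    linarith [mul_le_mul_of_nonneg_left dist_midpoint (abs_nonneg β)]
  linarith [(abs_lt.1 abs_lt_one).1]

end Phase

lemma two_lt_encard_of_lt_of_lt {α : Type*} [Preorder α] {s : Set α} {x y z : α} (hx : x ∈ s)
    (hy : y ∈ s) (hz : z ∈ s) (hxy : x < y) (hyz : y < z) : 2 < s.encard := by
  have card_three : ({x, y, z} : Set α).encard = 3 :=
    encard_eq_three.2 ⟨x, y, z, hxy.ne, (hxy.trans hyz).ne, hyz.ne, rfl⟩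
  have sub : {x, y, z} ⊆ s := by simp [insert_subset_iff, hx, hy, hz]
  exact lt_of_lt_of_le (by norm_num) (card_three ▸ encard_le_encard sub)

namespace IsSolutionOn

variable {a b μ β : ℝ} {c P u v : ℝ → ℝ}

/-- Comparison with the phase that runs from `0` to `π` with the affine frequency
`π / (b - a) * (1 + β * (r - (a + b) / 2))`. -/
lemma exists_coeff_eq_affine_frequency (ha : 0 < a) (hab : a < b)
    (hβ : |β| * (b - a) < 2) (hu : IsSolutionOn (fun r => r⁻¹) P u v a b)
    (nu : IsNodalInterval u a b) :
    ∃ r ∈ Ioo a b, P r + 1 / (4 * r ^ 2) =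
      (π / (b - a)) ^ 2 * (1 + β * (r - (a + b) / 2)) ^ 2
        - 3 / 4 * (β / (1 + β * (r - (a + b) / 2))) ^ 2 := by
  have hba : 0 < b - a := sub_pos.2 hab
  set k : ℝ := π / (b - a) with hk
  have k_pos : 0 < k := by positivity
  set h : ℝ → ℝ := fun r => 1 + β * (r - (a + b) / 2) with hh
  set ρ : ℝ → ℝ := fun r => k * ((r - a) + β / 2 * ((r - a) * (r - b))) with hρ
  have ω_pos : ∀ r ∈ Icc a b, 0 < k * h r :=
    fun r hr => mul_pos k_pos (one_add_mul_sub_midpoint_pos hβ hr)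
  have hasDerivAt_ω : ∀ r, HasDerivAt (fun r => k * h r) (k * β) r := fun r => by
    simpa using ((((hasDerivAt_id r).sub_const ((a + b) / 2)).const_mul β).const_add 1).const_mul k
  have hasDerivAt_ρ : ∀ r, HasDerivAt ρ (k * h r) r := by
    intro r
    have da := (hasDerivAt_id r).sub_const a
    have db := (hasDerivAt_id r).sub_const b
    refine ((da.add ((da.mul db).const_mul (β / 2))).const_mul k).congr_deriv ?_
    simp only [hh, id]
    ring
  have nodal := isNodalInterval_sin_phase_div_sqrt hab.le ω_pos (fun r _ => hasDerivAt_ρ r)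
    (by simp [hρ]) (by simp only [hρ, hk]; field_simp; ring)
  have comparison := isSolutionOn_sin_phase_div_sqrt ω_pos (fun r _ => hasDerivAt_ρ r)
    (fun r _ => hasDerivAt_ω r) (fun r _ => hasDerivAt_const r (k * β))
  have nodal_sqrt_mul : IsNodalInterval (fun r => √r * u r) a b :=
    ⟨by simp [nu.left], by simp [nu.right],
      fun r hr => mul_ne_zero (sqrt_pos.2 (ha.trans hr.1)).ne' (nu.ne_zero r hr)⟩
  obtain ⟨r, hr, coeff_eq⟩ :=
    (hu.liouville_transform ha).exists_coeff_eq hab comparison nodal_sqrt_mul nodal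
  refine ⟨r, hr, coeff_eq.trans ?_⟩
  rw [mul_div_mul_left _ _ k_pos.ne']
  ring

lemma exists_coeff_eq_sq (ha : 0 < a) (hab : a < b)
    (hu : IsSolutionOn (fun r => r⁻¹) P u v a b) (nu : IsNodalInterval u a b) :
    ∃ r ∈ Ioo a b, P r + 1 / (4 * r ^ 2) = (π / (b - a)) ^ 2 := by
  simpa using hu.exists_coeff_eq_affine_frequency (β := 0) ha hab (by simp) nu

lemma radial_deriv (ha : 0 < a) (hu : IsSolutionOn (fun r => r⁻¹) (fun _ => μ) u v a b) :
    IsSolutionOn (fun r => r⁻¹) (fun r => μ - 1 / r ^ 2) v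
      (fun r => -(r⁻¹ * v r) - μ * u r) a b where
  continuousOn := hu.continuousOn_deriv
  continuousOn_deriv := ((continuousOn_id.inv₀ fun _ hr => (ha.trans_le hr.1).ne').mul
    hu.continuousOn_deriv).neg.sub (hu.continuousOn.const_mul μ)
  hasDerivAt := hu.hasDerivAt_deriv
  hasDerivAt_deriv r hr := by
    have hr₀ : r ≠ 0 := (ha.trans hr.1).ne'
    refine ((((hasDerivAt_inv hr₀).mul (hu.hasDerivAt_deriv r hr)).neg).sub
      ((hu.hasDerivAt r hr).const_mul μ)).congr_deriv ?_
    field_simp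
    ring

/-- Rolle's theorem for `r * u'(r)`, whose derivative is `-μ * r * u(r)`. -/
lemma exists_zero_between_zeros_deriv (ha : 0 < a) (hab : a < b) (hμ : μ ≠ 0)
    (hu : IsSolutionOn (fun r => r⁻¹) (fun _ => μ) u v a b) (va : v a = 0) (vb : v b = 0) :
    ∃ r ∈ Ioo a b, u r = 0 := by
  obtain ⟨r, hr, flux_deriv⟩ := exists_hasDerivAt_eq_zero (f := fun r => r * v r) hab
    (continuousOn_id.mul hu.continuousOn_deriv) (by simp [va, vb])
    (fun r hr => (hasDerivAt_id r).mul (hu.hasDerivAt_deriv r hr))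
  have hr₀ : r ≠ 0 := (ha.trans hr.1).ne'
  have : μ * r * u r = 0 := by
    simp only [id] at flux_deriv
    field_simp at flux_deriv
    linear_combination -flux_deriv
  exact ⟨r, hr, (mul_eq_zero.1 this).resolve_left (mul_ne_zero hμ hr₀)⟩

lemma exists_zero_deriv_between_zeros (hab : a < b) (hu : IsSolutionOn c P u v a b)
    (ua : u a = 0) (ub : u b = 0) : ∃ r ∈ Ioo a b, v r = 0 :=
  exists_hasDerivAt_eq_zero hab hu.continuousOn (ua.trans ub.symm) hu.hasDerivAt

lemma exists_isNodalInterval_deriv (ha : 0 < a) (hμ : μ ≠ 0)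
    (hu : IsSolutionOn (fun r => r⁻¹) (fun _ => μ) u v a b) (va : v a = 0) (vb : v b = 0)
    (two_zeros : {r ∈ Ioo a b | u r = 0}.encard = 2) :
    ∃ x ∈ Ioo a b, IsNodalInterval v a x ∧ IsNodalInterval v x b := by
  have zero_between : ∀ x y, a ≤ x → x < y → y ≤ b → v x = 0 → v y = 0 →
      ∃ r ∈ Ioo x y, u r = 0 := fun x y hx hxy hy vx vy =>
    (hu.mono hx hy).exists_zero_between_zeros_deriv (ha.trans_le hx) hxy hμ vx vy
  have not_two_interior : ∀ x y, a < x → x < y → y < b → v x = 0 → v y ≠ 0 := by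
    intro x y hax hxy hyb vx vy
    obtain ⟨p, ⟨hap, hpx⟩, up⟩ := zero_between a x le_rfl hax (hxy.trans hyb).le va vx
    obtain ⟨q, ⟨hxq, hqy⟩, uq⟩ := zero_between x y hax.le hxy hyb.le vx vy
    obtain ⟨r, ⟨hyr, hrb⟩, ur⟩ := zero_between y b (hax.trans hxy).le hyb le_rfl vy vb
    have hp : p ∈ {r ∈ Ioo a b | u r = 0} := ⟨⟨hap, by linarith⟩, up⟩
    have hq : q ∈ {r ∈ Ioo a b | u r = 0} := ⟨⟨by linarith, by linarith⟩, uq⟩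
    have hr : r ∈ {r ∈ Ioo a b | u r = 0} := ⟨⟨by linarith, hrb⟩, ur⟩
    exact (two_lt_encard_of_lt_of_lt hp hq hr (hpx.trans hxq) (hqy.trans hyr)).ne' two_zeros
  have nontrivial : {r ∈ Ioo a b | u r = 0}.Nontrivial :=
    one_lt_encard_iff_nontrivial.1 (two_zeros ▸ by norm_num)
  obtain ⟨p, ⟨hp, up⟩, q, ⟨hq, uq⟩, hpq⟩ := nontrivial.exists_lt
  obtain ⟨x, hx, vx⟩ := (hu.mono hp.1.le hq.2.le).exists_zero_deriv_between_zeros hpq up uq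
  have hax : a < x := hp.1.trans hx.1
  have hxb : x < b := hx.2.trans hq.2
  exact ⟨x, ⟨hax, hxb⟩, ⟨va, vx, fun r hr vr => not_two_interior r x hr.1 hr.2 hxb vr vx⟩,
    ⟨vx, vb, fun r hr => not_two_interior x r hax hr.1 hr.2 vx⟩⟩

/-- The shorter of the two nodal intervals of `u'` gives the lower bound, the longer one the
upper bound. -/
lemma neumann_bounds (ha : 0 < a) (hμ : μ ≠ 0)
    (hu : IsSolutionOn (fun r => r⁻¹) (fun _ => μ) u v a b) (va : v a = 0) (vb : v b = 0)
    (two_zeros : {r ∈ Ioo a b | u r = 0}.encard = 2) :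
    4 * (π / (b - a)) ^ 2 ≤ μ ∧ μ ≤ 4 * (π / (b - a)) ^ 2 + 3 / (4 * a ^ 2) := by
  obtain ⟨x, ⟨hax, hxb⟩, nodal_left, nodal_right⟩ :=
    hu.exists_isNodalInterval_deriv ha hμ va vb two_zeros
  have length_bounds : ∀ y z, a ≤ y → y < z → z ≤ b → IsNodalInterval v y z →
      (π / (z - y)) ^ 2 ≤ μ ∧ μ ≤ (π / (z - y)) ^ 2 + 3 / (4 * a ^ 2) := by
    intro y z hay hyz hzb nodal
    obtain ⟨r, hr, coeff_eq⟩ := ((hu.radial_deriv ha).mono hay hzb).exists_coeff_eq_sq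
      (ha.trans_le hay) hyz nodal
    have har : a ≤ r := hay.trans hr.1.le
    have hr₀ : 0 < r := ha.trans_le har
    have combine : 1 / r ^ 2 - 1 / (4 * r ^ 2) = 3 / (4 * r ^ 2) := by field_simp; norm_num
    have nonneg : 0 ≤ 3 / (4 * r ^ 2) := by positivity
    have le_at_left : 3 / (4 * r ^ 2) ≤ 3 / (4 * a ^ 2) := by gcongr
    constructor <;> linarith
  have sq_div_anti : ∀ s t : ℝ, 0 < s → s ≤ t → (π / t) ^ 2 ≤ (π / s) ^ 2 := by
    intro s t hs hst
    have : 0 < t := hs.trans_le hst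
    gcongr
  have half : 4 * (π / (b - a)) ^ 2 = (π / ((b - a) / 2)) ^ 2 := by
    have : b - a ≠ 0 := by linarith
    field_simp
    norm_num
  have left_bounds := length_bounds a x le_rfl hax hxb.le nodal_left
  have right_bounds := length_bounds x b hax.le hxb le_rfl nodal_right
  rw [half]
  rcases le_total (x - a) (b - x) with hle | hle
  · exact ⟨(sq_div_anti _ _ (by linarith) (by linarith)).trans left_bounds.1,
      right_bounds.2.trans (by gcongr ?_ + _; exact sq_div_anti _ _ (by linarith) (by linarith))⟩
  · exact ⟨(sq_div_anti _ _ (by linarith) (by linarith)).trans right_bounds.1,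
      left_bounds.2.trans (by gcongr ?_ + _; exact sq_div_anti _ _ (by linarith) (by linarith))⟩

end IsSolutionOn

section Annulus

variable {a μ β : ℝ} {l : ℕ}

lemma NeumannMu02.bounds (h : NeumannMu02 a μ) (ha₀ : 0 < a) (ha₁ : a < 1) (hμ : μ ≠ 0) :
    4 * (π / (1 - a)) ^ 2 ≤ μ ∧ μ ≤ 4 * (π / (1 - a)) ^ 2 + 3 / (4 * a ^ 2) := by
  obtain ⟨ψ, hψ, ode, deriv_left, deriv_right, -, two_zeros⟩ := h
  have sol : IsSolutionOn (fun r => r⁻¹) (fun _ => μ) ψ (derivWithin ψ (Icc a 1)) a 1 :=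
    .of_contDiffOn ha₁ hψ fun r hr => by rw [← ode r hr]; ring
  exact sol.neumann_bounds ha₀ hμ deriv_left deriv_right two_zeros

lemma DirichletLam0.exists_coeff_eq (h : DirichletLam0 a μ l) (ha₀ : 0 < a) (ha₁ : a < 1)
    (hβ : |β| * (1 - a) < 2) :
    ∃ r ∈ Ioo a 1, μ - (l : ℝ) ^ 2 / r ^ 2 + 1 / (4 * r ^ 2) =
      (π / (1 - a)) ^ 2 * (1 + β * (r - (a + 1) / 2)) ^ 2
        - 3 / 4 * (β / (1 + β * (r - (a + 1) / 2))) ^ 2 := by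
  obtain ⟨φ, hφ, ode, left, right, pos⟩ := h
  have sol : IsSolutionOn (fun r => r⁻¹) (fun r => μ - (l : ℝ) ^ 2 / r ^ 2) φ
      (derivWithin φ (Icc a 1)) a 1 := .of_contDiffOn ha₁ hφ fun r hr => by
    rw [← ode r hr]; ring
  exact sol.exists_coeff_eq_affine_frequency ha₀ ha₁ hβ ⟨left, right, fun r hr => (pos r hr).ne'⟩

lemma DirichletLam0.sq_add_sq_le (h : DirichletLam0 a μ l) (ha₀ : 0 < a) (ha₁ : a < 1)
    (hl : 1 ≤ l) : (π / (1 - a)) ^ 2 + (l : ℝ) ^ 2 ≤ μ + 1 / 4 := by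
  obtain ⟨r, hr, coeff_eq⟩ := h.exists_coeff_eq (β := 0) ha₀ ha₁ (by simp)
  simp only [zero_mul, add_zero, one_pow, mul_one, zero_div, ne_eq, OfNat.ofNat_ne_zero,
    not_false_eq_true, zero_pow, mul_zero, sub_zero] at coeff_eq
  have hr₀ : 0 < r := ha₀.trans hr.1
  have hl' : (1 : ℝ) ≤ l := by exact_mod_cast hl
  have angular : (l : ℝ) ^ 2 - 1 / 4 ≤ (l : ℝ) ^ 2 / r ^ 2 - 1 / (4 * r ^ 2) := by
    have combine : (l : ℝ) ^ 2 / r ^ 2 - 1 / (4 * r ^ 2) = ((l : ℝ) ^ 2 - 1 / 4) / r ^ 2 := by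
      field_simp
    rw [combine]
    exact le_div_self (by nlinarith) (by positivity) (pow_le_one₀ hr₀.le hr.2.le)
  linarith

lemma mul_one_sub_le_two_pi_of_crossing (hN : NeumannMu02 a μ) (hD : DirichletLam0 a μ l)
    (ha : a ∈ Ioo (1 / 2) 1) (hμ : μ ≠ 0) (hl : 1 ≤ l) : l * (1 - a) ≤ 2 * π := by
  obtain ⟨ha_half, ha₁⟩ := ha
  have ha₀ : 0 < a := by linarith
  have gap : 0 < 1 - a := by linarith
  have neumann := (hN.bounds ha₀ ha₁ hμ).2
  have dirichlet := hD.sq_add_sq_le ha₀ ha₁ hl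
  have curvature : 3 / (4 * a ^ 2) ≤ 3 := div_le_self (by norm_num) (by nlinarith)
  have large : 6 ≤ π / (1 - a) := by
    rw [le_div_iff₀ gap]
    linarith [pi_gt_three]
  have sq_le : (l : ℝ) ^ 2 ≤ (2 * (π / (1 - a))) ^ 2 := by nlinarith
  have le_two_k : (l : ℝ) ≤ 2 * (π / (1 - a)) := (abs_le_of_sq_le_sq' sq_le (by positivity)).2
  rwa [← mul_div_assoc, le_div_iff₀ gap] at le_two_k

lemma inv_sq_sub_linear_mem_Icc {r : ℝ} (hr : 1 / 2 ≤ r) :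
    1 / r ^ 2 - (1 + 2 * (1 - r)) ∈ Icc 0 (12 * (1 - r) ^ 2) := by
  have hr₀ : 0 < r := by linarith
  have remainder : 1 / r ^ 2 - (1 + 2 * (1 - r)) = (1 - r) ^ 2 * ((1 + 2 * r) / r ^ 2) := by
    field_simp
    ring
  have le_twelve : (1 + 2 * r) / r ^ 2 ≤ 12 := by
    rw [div_le_iff₀ (by positivity)]
    nlinarith
  rw [remainder, mem_Icc]
  exact ⟨by positivity, by linarith [mul_le_mul_of_nonneg_left le_twelve (sq_nonneg (1 - r))]⟩

/-- The slope `β` of the frequency with `(π / (1 - a)) ^ 2 * β = l ^ 2`. It makes the parts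
linear in `r` of `(π / (1 - a)) ^ 2 * (1 + β * (r - (a + 1) / 2)) ^ 2` and `-l ^ 2 / r ^ 2` agree
to leading order, so that the unknown point of comparison `r` drops out. -/
noncomputable def matchedSlope (a : ℝ) (l : ℕ) : ℝ := (l * (1 - a) / π) ^ 2

lemma matchedSlope_nonneg : 0 ≤ matchedSlope a l := sq_nonneg _

lemma matchedSlope_le_four (ha : a ≤ 1) (hl : l * (1 - a) ≤ 2 * π) : matchedSlope a l ≤ 4 := by
  have : 0 ≤ 1 - a := sub_nonneg.2 ha
  have ratio_le : l * (1 - a) / π ≤ 2 := (div_le_iff₀ pi_pos).2 hl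
  calc (l * (1 - a) / π) ^ 2 ≤ 2 ^ 2 := by gcongr
    _ = 4 := by norm_num

lemma sq_mul_one_sub_sq_le_forty (ha : a ≤ 1) (hl : l * (1 - a) ≤ 2 * π) :
    (l : ℝ) ^ 2 * (1 - a) ^ 2 ≤ 40 := by
  have : 0 ≤ 1 - a := sub_nonneg.2 ha
  have sq_le : (l * (1 - a)) ^ 2 ≤ (2 * π) ^ 2 := by gcongr
  nlinarith [pi_gt_three, pi_lt_d2]

lemma DirichletLam0.exists_expansion (h : DirichletLam0 a μ l) (ha₀ : 0 < a) (ha₁ : a < 1)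
    (hβ : matchedSlope a l * (1 - a) < 2) :
    ∃ r ∈ Ioo a 1, μ - ((π / (1 - a)) ^ 2 + (l : ℝ) ^ 2 * (1 + (1 - a))) =
      (l : ℝ) ^ 2 * (r - (a + 1) / 2) ^ 2 * matchedSlope a l
        + (l : ℝ) ^ 2 * (1 / r ^ 2 - (1 + 2 * (1 - r))) - 1 / (4 * r ^ 2)
        - 3 / 4 * (matchedSlope a l / (1 + matchedSlope a l * (r - (a + 1) / 2))) ^ 2 := by
  obtain ⟨r, hr, coeff_eq⟩ :=
    h.exists_coeff_eq ha₀ ha₁ (by rwa [abs_of_nonneg matchedSlope_nonneg])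
  have gap : 1 - a ≠ 0 := (sub_pos.2 ha₁).ne'
  have matched : (π / (1 - a)) ^ 2 * matchedSlope a l = (l : ℝ) ^ 2 := by
    rw [matchedSlope]
    field_simp
  exact ⟨r, hr, by linear_combination coeff_eq
    + (2 * (r - (a + 1) / 2) + matchedSlope a l * (r - (a + 1) / 2) ^ 2) * matched⟩

lemma DirichletLam0.abs_sub_expansion_le (h : DirichletLam0 a μ l) (ha : a ∈ Ico (3 / 4) 1)
    (hl : l * (1 - a) ≤ 2 * π) :
    |μ - ((π / (1 - a)) ^ 2 + (l : ℝ) ^ 2 * (1 + (1 - a)))| ≤ 520 := by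
  obtain ⟨ha_lower, ha₁⟩ := ha
  have β_nonneg : 0 ≤ matchedSlope a l := matchedSlope_nonneg
  have β_le : matchedSlope a l ≤ 4 := matchedSlope_le_four ha₁.le hl
  obtain ⟨r, ⟨har, hr₁⟩, expansion⟩ := h.exists_expansion (by linarith) ha₁ (by nlinarith)
  set β := matchedSlope a l
  set x := r - (a + 1) / 2 with hx
  have x_lower : -((1 - a) / 2) ≤ x := by linarith
  have scaled_sq := sq_mul_one_sub_sq_le_forty ha₁.le hl
  have square_error : (l : ℝ) ^ 2 * x ^ 2 * β ∈ Icc 0 40 := by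
    have x_sq_le : x ^ 2 ≤ ((1 - a) / 2) ^ 2 := sq_le_sq' x_lower (by linarith)
    have : (l : ℝ) ^ 2 * x ^ 2 ≤ 10 := by
      linarith [mul_le_mul_of_nonneg_left x_sq_le (sq_nonneg (l : ℝ))]
    exact ⟨by positivity, by nlinarith⟩
  have angular_error : (l : ℝ) ^ 2 * (1 / r ^ 2 - (1 + 2 * (1 - r))) ∈ Icc 0 480 := by
    obtain ⟨lower, upper⟩ := inv_sq_sub_linear_mem_Icc (r := r) (by linarith)
    have y_sq_le : (1 - r) ^ 2 ≤ (1 - a) ^ 2 := sq_le_sq' (by linarith) (by linarith)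
    refine ⟨mul_nonneg (sq_nonneg _) lower, ?_⟩
    linarith [mul_le_mul_of_nonneg_left upper (sq_nonneg (l : ℝ)),
      mul_le_mul_of_nonneg_left y_sq_le (sq_nonneg (l : ℝ))]
  have normal_form_error : 1 / (4 * r ^ 2) ∈ Icc 0 1 :=
    ⟨by positivity, div_le_one_of_le₀ (by nlinarith) (by positivity)⟩
  have amplitude_error : 3 / 4 * (β / (1 + β * x)) ^ 2 ∈ Icc 0 48 := by
    have frequency_ge : 1 / 2 ≤ 1 + β * x := by nlinarith
    have ratio_le : β / (1 + β * x) ≤ 8 := by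
      rw [div_le_iff₀ (by linarith)]
      linarith
    have : (β / (1 + β * x)) ^ 2 ≤ 8 ^ 2 := by gcongr
    exact ⟨by positivity, by linarith⟩
  rw [expansion, abs_le]
  simp only [mem_Icc] at square_error angular_error normal_form_error amplitude_error
  constructor <;> linarith

lemma abs_three_pi_sq_sub_le_of_crossing (hN : NeumannMu02 a μ) (hD : DirichletLam0 a μ l)
    (ha : a ∈ Ioo (1 / 2) 1) (hμ : μ ≠ 0) (hl : 28 ≤ l) :
    |3 * π ^ 2 - (l * (1 - a)) ^ 2 * (1 + (1 - a))| ≤ 523 * (1 - a) ^ 2 := by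
  have scaled := mul_one_sub_le_two_pi_of_crossing hN hD ha hμ (by lia)
  obtain ⟨ha_half, ha₁⟩ := ha
  have : 0 < 1 - a := by linarith
  have ha_lower : 3 / 4 ≤ a := by
    have : (28 : ℝ) ≤ l := by exact_mod_cast hl
    nlinarith [pi_lt_d2]
  have curvature : 3 / (4 * a ^ 2) ≤ 3 := div_le_self (by norm_num) (by nlinarith)
  obtain ⟨neumann_lower, neumann_upper⟩ := hN.bounds (by linarith) ha₁ hμ
  obtain ⟨dirichlet_lower, dirichlet_upper⟩ :=
    abs_le.1 (hD.abs_sub_expansion_le ⟨ha_lower, ha₁⟩ scaled)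
  have difference : |3 * (π / (1 - a)) ^ 2 - (l : ℝ) ^ 2 * (1 + (1 - a))| ≤ 523 :=
    abs_le.2 ⟨by linarith, by linarith⟩
  calc |3 * π ^ 2 - (l * (1 - a)) ^ 2 * (1 + (1 - a))|
      = |(3 * (π / (1 - a)) ^ 2 - (l : ℝ) ^ 2 * (1 + (1 - a))) * (1 - a) ^ 2| := by
        congr 1
        field_simp
    _ = |3 * (π / (1 - a)) ^ 2 - (l : ℝ) ^ 2 * (1 + (1 - a))| * (1 - a) ^ 2 := by
        rw [abs_mul, abs_of_nonneg (sq_nonneg (1 - a))]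
    _ ≤ 523 * (1 - a) ^ 2 := by gcongr

end Annulus

section SquareRoot

variable {n d c s M S : ℝ}

lemma abs_sub_mul_one_add_half_le (hc : 1 ≤ c) (hs : s ∈ Icc 0 S) (hd : 0 ≤ d)
    (h : |c ^ 2 - s ^ 2 * (1 + d)| ≤ M * d ^ 2) :
    |c - s * (1 + d / 2)| ≤ (M + S ^ 2) * d ^ 2 := by
  obtain ⟨hs₀, hsS⟩ := hs
  have one_le : 1 ≤ c + s * (1 + d / 2) := hc.trans (le_add_of_nonneg_right (by positivity))
  calc |c - s * (1 + d / 2)|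
      ≤ |c - s * (1 + d / 2)| * |c + s * (1 + d / 2)| :=
        le_mul_of_one_le_right (abs_nonneg _) (one_le.trans (le_abs_self _))
    _ = |c ^ 2 - s ^ 2 * (1 + d) - s ^ 2 * (d ^ 2 / 4)| := by
        rw [← abs_mul]
        congr 1
        ring
    _ ≤ |c ^ 2 - s ^ 2 * (1 + d)| + |s ^ 2 * (d ^ 2 / 4)| := abs_sub _ _
    _ ≤ M * d ^ 2 + S ^ 2 * d ^ 2 := by
        rw [abs_of_nonneg (by positivity : 0 ≤ s ^ 2 * (d ^ 2 / 4))]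
        gcongr
        linarith [sq_nonneg d]
    _ = (M + S ^ 2) * d ^ 2 := by ring

lemma abs_sq_sub_sq_le (hs : s ∈ Icc 0 S) (hd : d ∈ Ioc 0 1)
    (h : |c ^ 2 - s ^ 2 * (1 + d)| ≤ M * d ^ 2) : |c ^ 2 - s ^ 2| ≤ (M + S ^ 2) * d := by
  obtain ⟨hs₀, hsS⟩ := hs
  obtain ⟨hd₀, hd₁⟩ := hd
  have hM : 0 ≤ M := nonneg_of_mul_nonneg_left ((abs_nonneg _).trans h) (by positivity)
  calc |c ^ 2 - s ^ 2| = |c ^ 2 - s ^ 2 * (1 + d) + s ^ 2 * d| := by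
        congr 1
        ring
    _ ≤ |c ^ 2 - s ^ 2 * (1 + d)| + |s ^ 2 * d| := abs_add_le _ _
    _ ≤ M * d + S ^ 2 * d := by
        rw [abs_of_nonneg (by positivity : 0 ≤ s ^ 2 * d)]
        gcongr
        exact h.trans (by gcongr; exact pow_le_of_le_one hd₀.le hd₁ two_ne_zero)
    _ = (M + S ^ 2) * d := by ring

/-- Take square roots in `c ^ 2 ≈ s ^ 2 * (1 + d)`, where `s = n * d`, to get `c ≈ s + s * d / 2`,
and then replace `s * d = s ^ 2 / n` by `c ^ 2 / n`. -/
lemma abs_sub_sub_sq_div_le (hn : 0 < n) (hd : d ∈ Ioc 0 1) (hc : 1 ≤ c) (hS : n * d ≤ S)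
    (h : |c ^ 2 - (n * d) ^ 2 * (1 + d)| ≤ M * d ^ 2) :
    |c - n * d - c ^ 2 / (2 * n)| ≤ (M + S ^ 2) * (S ^ 2 + S) / n ^ 2 := by
  have hd₀ : 0 < d := hd.1
  have hs : n * d ∈ Icc 0 S := ⟨by positivity, hS⟩
  have root := abs_sub_mul_one_add_half_le hc hs hd₀.le h
  have leading := abs_sq_sub_sq_le hs hd h
  have coeff_nonneg : 0 ≤ M + S ^ 2 :=
    nonneg_of_mul_nonneg_left ((abs_nonneg _).trans leading) hd₀
  calc |c - n * d - c ^ 2 / (2 * n)|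
      = |c - n * d * (1 + d / 2) - (c ^ 2 - (n * d) ^ 2) / (2 * n)| := by
        congr 1
        field_simp
        ring
    _ ≤ |c - n * d * (1 + d / 2)| + |(c ^ 2 - (n * d) ^ 2) / (2 * n)| := abs_sub _ _
    _ = |c - n * d * (1 + d / 2)| + |c ^ 2 - (n * d) ^ 2| / (2 * n) := by
        rw [abs_div, abs_of_pos (by positivity : 0 < 2 * n)]
    _ ≤ (M + S ^ 2) * d ^ 2 + (M + S ^ 2) * d / (2 * n) := by gcongr
    _ = (M + S ^ 2) * ((n * d) ^ 2 + n * d / 2) / n ^ 2 := by field_simp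
    _ ≤ (M + S ^ 2) * (S ^ 2 + S) / n ^ 2 := by
        have half_le : n * d / 2 ≤ S := (half_le_self hs.1).trans hS
        gcongr

end SquareRoot

/-- Second-order asymptotics of the crossing points:
`a_l = 1 − √3·π/l + 3π²/(2l²) + O(l⁻³)`. -/
theorem crossing_point_second_order_asymptotics :
    ∃ C > (0:ℝ), ∃ L : ℕ, ∀ l : ℕ, L ≤ l →
      ∀ a ∈ Set.Ioo (1/2 : ℝ) 1, ∀ μ > (0:ℝ),
        NeumannMu02 a μ → DirichletLam0 a μ l →
        |a - (1 - Real.sqrt 3 * π / l + 3 * π^2 / (2 * (l:ℝ)^2))| ≤ C / (l:ℝ)^3 := by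
  refine ⟨(523 + (2 * π) ^ 2) * ((2 * π) ^ 2 + 2 * π), by positivity, 28, ?_⟩
  intro l hl a ha μ hμ hN hD
  have l_pos : (0 : ℝ) < l := by exact_mod_cast (by lia : 0 < l)
  have gap : 1 - a ∈ Ioc 0 1 := ⟨by linarith [ha.2], by linarith [ha.1]⟩
  have c_sq : (√3 * π) ^ 2 = 3 * π ^ 2 := by rw [mul_pow, sq_sqrt (by norm_num)]
  have one_le_c : 1 ≤ √3 * π :=
    one_le_mul_of_one_le_of_one_le (by rw [one_le_sqrt]; norm_num) (by linarith [pi_gt_three])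
  have scaled : l * (1 - a) ≤ 2 * π := mul_one_sub_le_two_pi_of_crossing hN hD ha hμ.ne' (by lia)
  have crossing := abs_three_pi_sq_sub_le_of_crossing hN hD ha hμ.ne' hl
  have second_order := abs_sub_sub_sq_div_le l_pos gap one_le_c scaled (c_sq ▸ crossing)
  calc |a - (1 - √3 * π / l + 3 * π ^ 2 / (2 * (l : ℝ) ^ 2))|
      = |√3 * π - l * (1 - a) - (√3 * π) ^ 2 / (2 * l)| / (l : ℝ) := by
        rw [← abs_of_pos l_pos, ← abs_div, abs_of_pos l_pos, c_sq]
        congr 1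
        field_simp
        ring
    _ ≤ (523 + (2 * π) ^ 2) * ((2 * π) ^ 2 + 2 * π) / (l : ℝ) ^ 2 / l := by gcongr
    _ = _ := by rw [div_div, ← pow_succ]
end

section
/- Let U be an open neighborhood of (0,0) in ℝ² contained in {|η| + |ε| < 1/100}, and suppose Λ : U → ℝ and Φ : U × [0,π] → ℝ are real-analytic functions such that for every (η,ε) ∈ U: the function x ↦ Φ(η,ε,x) satisfies T_{η,ε}Φ(η,ε,·) + Λ(η,ε)·Φ(η,ε,·) = 0 on (0,π), Φ(η,ε,0) = Φ(η,ε,π) = 0, and the normalization ∫₀^π Φ(η,ε,x) sin(x) dx = π/2; and suppose Λ(0,0) = 4 and Φ(0,0,x) = sin(x). Then there exist a constant C > 0 and a neighborhood V ⊆ U of (0,0) such that |Λ(η,ε) − 4 − 3πη − 6ε| ≤ C(η² + ε²) for all (η,ε) ∈ V. -/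
open Set Real

noncomputable section

/-- The operator `T_{η,ε} u = u'' − [η(1+ε)/(1−η(1+ε)x)] u' − [3(1+ε)²/(1−η(1+ε)x)²] u`,
with derivatives taken within `[0,π]`. -/
def Tde (η ε : ℝ) (u : ℝ → ℝ) (x : ℝ) : ℝ :=
  derivWithin (derivWithin u (Set.Icc 0 π)) (Set.Icc 0 π) x
    - (η * (1 + ε) / (1 - η * (1 + ε) * x)) * derivWithin u (Set.Icc 0 π) x
    - (3 * (1 + ε)^2 / (1 - η * (1 + ε) * x)^2) * u x

/-!
Pair the equation `T u + Λ u = 0` with the resonant mode `sin`. Since `sin'' = -sin`, Green's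
identity removes the unperturbed operator and leaves the solvability condition
`(Λ - 4) ∫ u sin = ∫ (perturbation u) sin`, whose left side is `(Λ - 4) π / 2` by the normalization.
The perturbation is already `O(‖p‖)`, with `p = (η, ε)`, so first order in `Λ` requires `u` and `u'`
only to zeroth order: replacing them by `sin` and `cos`, and the coefficients by their linear parts
`η` and `6 (ε + η x)`, costs `O(‖p‖²)` uniformly in `x`, and leaves an explicit integral.
-/

open scoped ContDiff
open Filter Topology Asymptotics Function Interval MeasureTheory

section Slices

variable {𝕜 E F G : Type*} [RCLike 𝕜] [NormedAddCommGroup E] [NormedSpace 𝕜 E]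
  [NormedAddCommGroup F] [NormedSpace 𝕜 F] [NormedAddCommGroup G] [NormedSpace 𝕜 G]

theorem isBigO_sub_slice {f : E × F → G} {p₀ : E} {K : Set F}
    (hK : IsCompact K) (hf : ∀ x ∈ K, ContDiffAt 𝕜 1 f (p₀, x)) :
    (fun q => f q - f (p₀, q.2)) =O[𝓝 p₀ ×ˢ 𝓟 K] fun q => ‖q.1 - p₀‖ := by
  refine hK.induction_on
    (p := fun s => (fun q => f q - f (p₀, q.2)) =O[𝓝 p₀ ×ˢ 𝓟 s] fun q => ‖q.1 - p₀‖)
    (by simp) (fun s t hst ht => ht.mono (prod_mono_right _ (principal_mono.2 hst)))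
    (fun s t hs ht => by simpa only [← sup_principal, prod_sup] using hs.sup ht)
    fun x hx => ?_
  obtain ⟨C, t, ht, hLip⟩ := (hf x hx).exists_lipschitzOnWith
  rw [nhds_prod_eq, mem_prod_iff] at ht
  obtain ⟨A, hA, B, hB, hAB⟩ := ht
  refine ⟨B, mem_nhdsWithin_of_mem_nhds hB, IsBigO.of_bound C ?_⟩
  filter_upwards [prod_mem_prod hA (mem_principal_self B)] with q hq
  have hdist := hLip.dist_le_mul q (hAB hq) (p₀, q.2) (hAB ⟨mem_of_mem_nhds hA, hq.2⟩)
  simpa [dist_eq_norm, Prod.norm_def] using hdist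

theorem isBigO_norm_fst_of_eq_zero {f : E × F → G} {p₀ : E} {K : Set F} (hK : IsCompact K)
    (hf : ∀ x ∈ K, ContDiffAt 𝕜 1 f (p₀, x)) (hf_zero : ∀ x, f (p₀, x) = 0) :
    f =O[𝓝 p₀ ×ˢ 𝓟 K] fun q => ‖q.1 - p₀‖ := by
  simpa only [hf_zero, sub_zero] using isBigO_sub_slice hK hf

theorem eventually_contDiffAt_slice {f : E → F → G} {p₀ : E} {K : Set F} {n : WithTop ℕ∞}
    (hK : IsCompact K) (hn : n ≠ ∞) (hf : ∀ x ∈ K, ContDiffAt 𝕜 n (uncurry f) (p₀, x)) :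
    ∀ᶠ p in 𝓝 p₀, ∀ x ∈ K, ContDiffAt 𝕜 n (f p) x :=
  hK.eventually_forall_of_forall_eventually fun x hx =>
    ((hf x hx).eventually hn).mono fun q hq =>
      hq.comp (f := fun x => (q.1, x)) q.2 (contDiffAt_const.prodMk contDiffAt_id)

theorem contDiffAt_deriv_slice {m n : WithTop ℕ∞} {f : E → 𝕜 → G} {p : E} {x : 𝕜}
    (hf : ContDiffAt 𝕜 n (uncurry f) (p, x)) (hmn : m + 1 ≤ n) :
    ContDiffAt 𝕜 m (fun q : E × 𝕜 => deriv (f q.1) q.2) (p, x) := by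
  have hf' : ContDiffAt 𝕜 n (uncurry fun (q : E × 𝕜) => f q.1) ((p, x), x) :=
    hf.comp ((p, x), x) (contDiffAt_fst.fst.prodMk contDiffAt_snd)
  exact (hf'.fderiv contDiffAt_snd hmn).clm_apply contDiffAt_const

end Slices

theorem isBigO_mul_sub_mul {α R : Type*} [NormedRing R] {l : Filter α} {f f₀ g g₀ : α → R}
    {r : α → ℝ}
    (hr : r =O[l] fun _ => (1 : ℝ)) (hg₀ : g₀ =O[l] fun _ => (1 : ℝ)) (hf₀ : f₀ =O[l] r)
    (hf : (fun a => f a - f₀ a) =O[l] fun a => r a ^ 2) (hg : (fun a => g a - g₀ a) =O[l] r) :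
    (fun a => f a * g a - f₀ a * g₀ a) =O[l] fun a => r a ^ 2 := by
  have hg_one : g =O[l] fun _ => (1 : ℝ) :=
    ((hg.trans hr).add hg₀).congr_left fun a => sub_add_cancel _ _
  have hleft : (fun a => (f a - f₀ a) * g a) =O[l] fun a => r a ^ 2 := by
    simpa only [mul_one] using hf.mul hg_one
  have hright : (fun a => f₀ a * (g a - g₀ a)) =O[l] fun a => r a ^ 2 := by
    simpa only [sq] using hf₀.mul hg
  exact (hleft.add hright).congr_left fun a => by noncomm_ring

theorem isBigO_intervalIntegral {α E F : Type*} [NormedAddCommGroup E] [NormedSpace ℝ E] [Norm F]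
    {l : Filter α} {a b : ℝ} (hab : a ≤ b) {f : α × ℝ → E} {g : α → F}
    (h : f =O[l ×ˢ 𝓟 (Ioo a b)] fun q => g q.1) :
    (fun p => ∫ x in a..b, f (p, x)) =O[l] g := by
  obtain ⟨C, hC⟩ := h.bound
  refine IsBigO.of_bound (C * |b - a|) ?_
  filter_upwards [eventually_prod_principal_iff.1 hC] with p hp
  rw [mul_right_comm]
  refine intervalIntegral.norm_integral_le_of_norm_le_const_ae ?_
  filter_upwards [(Ioo_ae_eq_Ioc (a := a) (b := b) (μ := volume)).mem_iff] with x hx hx_mem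
  rw [uIoc_of_le hab] at hx_mem
  exact hp x (hx.2 hx_mem)

theorem exists_isOpen_forall_abs_le_of_isBigO {X : Type*} [TopologicalSpace X] {f g : X → ℝ}
    {x₀ : X} {U : Set X} (hU : U ∈ 𝓝 x₀) (hg : 0 ≤ g) (h : f =O[𝓝 x₀] g) :
    ∃ C > 0, ∃ V ⊆ U, IsOpen V ∧ x₀ ∈ V ∧ ∀ x ∈ V, |f x| ≤ C * g x := by
  obtain ⟨C, hC, hbound⟩ := h.exists_pos
  obtain ⟨V, hV, hV_open, hx₀⟩ := mem_nhds_iff.1 (inter_mem hU hbound.bound)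
  refine ⟨C, hC, V, fun x hx => (hV hx).1, hV_open, hx₀, fun x hx => ?_⟩
  have hx_bound : ‖f x‖ ≤ C * ‖g x‖ := (hV hx).2
  rwa [Real.norm_eq_abs, Real.norm_of_nonneg (hg x)] at hx_bound

theorem continuousOn_deriv_deriv {F : Type*} [NormedAddCommGroup F] [NormedSpace ℝ F]
    {s : Set ℝ} {u : ℝ → F} (hu : ∀ x ∈ s, ContDiffAt ℝ 2 u x) :
    ContinuousOn (deriv (deriv u)) s := fun x hx =>
  (((hu x hx).derivWithin (m := 1) (by norm_num)).derivWithin (m := 0)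
    (by norm_num)).continuousAt.continuousWithinAt

theorem integral_deriv_deriv_mul_of_dirichlet {A : Type*} [NormedRing A] [NormedAlgebra ℝ A]
    [CompleteSpace A] {a b : ℝ} {u v : ℝ → A}
    (hu : ∀ x ∈ [[a, b]], ContDiffAt ℝ 2 u x) (hv : ∀ x ∈ [[a, b]], ContDiffAt ℝ 2 v x)
    (hua : u a = 0) (hub : u b = 0) (hva : v a = 0) (hvb : v b = 0) :
    ∫ x in a..b, deriv (deriv u) x * v x = ∫ x in a..b, u x * deriv (deriv v) x := by
  have hasDerivAt {w : ℝ → A} (hw : ∀ x ∈ [[a, b]], ContDiffAt ℝ 2 w x) :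
      ∀ x ∈ [[a, b]], HasDerivAt w (deriv w x) x := fun x hx =>
    ((hw x hx).differentiableAt (by norm_num)).hasDerivAt
  have hasDerivAt_deriv {w : ℝ → A} (hw : ∀ x ∈ [[a, b]], ContDiffAt ℝ 2 w x) :
      ∀ x ∈ [[a, b]], HasDerivAt (deriv w) (deriv (deriv w) x) x := fun x hx =>
    (((hw x hx).derivWithin (m := 1) (by norm_num)).differentiableAt (by norm_num)).hasDerivAt
  have integrable_deriv {w : ℝ → A} (hw : ∀ x ∈ [[a, b]], ContDiffAt ℝ 2 w x) :
      IntervalIntegrable (deriv w) volume a b :=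
    ContinuousOn.intervalIntegrable fun x hx =>
      (hasDerivAt_deriv hw x hx).continuousAt.continuousWithinAt
  rw [intervalIntegral.integral_mul_deriv_eq_deriv_mul (hasDerivAt hu) (hasDerivAt_deriv hv)
      (integrable_deriv hu) (continuousOn_deriv_deriv hv).intervalIntegrable,
    intervalIntegral.integral_mul_deriv_eq_deriv_mul (hasDerivAt_deriv hu) (hasDerivAt hv)
      (continuousOn_deriv_deriv hu).intervalIntegrable (integrable_deriv hv)]
  simp [hua, hub, hva, hvb]

theorem integral_deriv_deriv_add_mul_of_dirichlet {a b μ ν : ℝ} {u v : ℝ → ℝ}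
    (hu : ∀ x ∈ [[a, b]], ContDiffAt ℝ 2 u x) (hv : ∀ x ∈ [[a, b]], ContDiffAt ℝ 2 v x)
    (hua : u a = 0) (hub : u b = 0) (hva : v a = 0) (hvb : v b = 0)
    (hv_eigen : ∀ x ∈ [[a, b]], deriv (deriv v) x = -ν * v x) :
    ∫ x in a..b, (deriv (deriv u) x + μ * u x) * v x = (μ - ν) * ∫ x in a..b, u x * v x := by
  have hu_cont : ContinuousOn u [[a, b]] := fun x hx => (hu x hx).continuousAt.continuousWithinAt
  have hv_cont : ContinuousOn v [[a, b]] := fun x hx => (hv x hx).continuousAt.continuousWithinAt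
  have hderiv_int : IntervalIntegrable (fun x => deriv (deriv u) x * v x) volume a b :=
    ((continuousOn_deriv_deriv hu).mul hv_cont).intervalIntegrable
  have hmul_int : IntervalIntegrable (fun x => u x * v x) volume a b :=
    (hu_cont.mul hv_cont).intervalIntegrable
  have hgreen : ∫ x in a..b, deriv (deriv u) x * v x = -ν * ∫ x in a..b, u x * v x := by
    rw [integral_deriv_deriv_mul_of_dirichlet hu hv hua hub hva hvb,
      ← intervalIntegral.integral_const_mul]
    refine intervalIntegral.integral_congr fun x hx => ?_
    simp only [hv_eigen x hx]
    ring
  simp only [add_mul, mul_assoc]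
  rw [intervalIntegral.integral_add hderiv_int (hmul_int.const_mul μ),
    intervalIntegral.integral_const_mul, hgreen]
  ring

theorem integral_id_mul_of_symm {a b : ℝ} {f : ℝ → ℝ} (hf : ∀ x, f (a + b - x) = f x)
    (hf_int : IntervalIntegrable f volume a b) :
    ∫ x in a..b, x * f x = (a + b) / 2 * ∫ x in a..b, f x := by
  have hreflect : ∫ x in a..b, (a + b - x) * f x = ∫ x in a..b, x * f x := by
    simpa [hf] using intervalIntegral.integral_comp_sub_left (a := a) (b := b)
      (fun x => x * f x) (a + b)
  have hsplit : ∫ x in a..b, (a + b - x) * f x =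
      (a + b) * (∫ x in a..b, f x) - ∫ x in a..b, x * f x := by
    simp only [sub_mul]
    rw [intervalIntegral.integral_sub (hf_int.const_mul _)
      (hf_int.continuousOn_mul (g := fun x => x) continuousOn_id),
      intervalIntegral.integral_const_mul]
  linarith

/-- In the annulus variable `r = 1 - η (1 + ε) x`, with `p = (η, ε)`, this is `(1 + ε) / r`;
both lower-order coefficients of `Tde` are polynomials in it. -/
def invRadius (p : ℝ × ℝ) (x : ℝ) : ℝ :=
  (1 + p.2) / (1 - p.1 * (1 + p.2) * x)

/-- The perturbation `T_{0,0} u - T_{η,ε} u`, where `p = (η, ε)`. -/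
def perturbation (p : ℝ × ℝ) (u : ℝ → ℝ) (x : ℝ) : ℝ :=
  p.1 * invRadius p x * deriv u x + 3 * (invRadius p x ^ 2 - 1) * u x

/-- The part of `perturbation p sin` that is linear in `p = (η, ε)`. -/
def linearPerturbation (p : ℝ × ℝ) (x : ℝ) : ℝ :=
  p.1 * cos x + 6 * (p.2 + p.1 * x) * sin x

theorem Tde_of_mem_Ioo (p : ℝ × ℝ) (u : ℝ → ℝ) {x : ℝ} (hx : x ∈ Ioo 0 π) :
    Tde p.1 p.2 u x = deriv (deriv u) x - 3 * u x - perturbation p u x := by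
  have hderiv {v : ℝ → ℝ} {y : ℝ} (hy : y ∈ Ioo 0 π) : derivWithin v (Icc 0 π) y = deriv v y :=
    derivWithin_of_mem_nhds (Icc_mem_nhds hy.1 hy.2)
  have heq : derivWithin u (Icc 0 π) =ᶠ[𝓝 x] deriv u := by
    filter_upwards [Ioo_mem_nhds hx.1 hx.2] with y hy using hderiv hy
  rw [Tde, hderiv hx, hderiv hx, heq.deriv_eq, perturbation, invRadius, mul_div_assoc,
    mul_div_assoc, ← div_pow]
  ring

theorem continuous_linearPerturbation (p : ℝ × ℝ) : Continuous (linearPerturbation p) := by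
  unfold linearPerturbation
  fun_prop

theorem integral_linearPerturbation_mul_sin (p : ℝ × ℝ) :
    ∫ x in (0 : ℝ)..π, linearPerturbation p x * sin x = π / 2 * (3 * π * p.1 + 6 * p.2) := by
  have hsq : ∫ x in (0 : ℝ)..π, sin x ^ 2 = π / 2 := by simp [integral_sin_sq]
  have hmoment : ∫ x in (0 : ℝ)..π, x * sin x ^ 2 = π / 2 * (π / 2) := by
    rw [integral_id_mul_of_symm (fun x => by simp [sin_pi_sub])
      (Continuous.intervalIntegrable (by fun_prop) _ _), hsq, zero_add]
  calc ∫ x in (0 : ℝ)..π, linearPerturbation p x * sin x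
    _ = ∫ x in (0 : ℝ)..π,
          p.1 * (sin x * cos x) + (6 * p.2 * sin x ^ 2 + 6 * p.1 * (x * sin x ^ 2)) := by
        simp only [linearPerturbation]
        congr! 2 with x
        ring
    _ = p.1 * (∫ x in (0 : ℝ)..π, sin x * cos x) +
          (6 * p.2 * (∫ x in (0 : ℝ)..π, sin x ^ 2) +
            6 * p.1 * ∫ x in (0 : ℝ)..π, x * sin x ^ 2) := by
        rw [intervalIntegral.integral_add, intervalIntegral.integral_add]
        · simp only [intervalIntegral.integral_const_mul]
        all_goals exact Continuous.intervalIntegrable (by fun_prop) _ _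
    _ = π / 2 * (3 * π * p.1 + 6 * p.2) := by
        rw [hsq, hmoment, integral_sin_mul_cos₁]
        simp
        ring

theorem eqOn_perturbation {p : ℝ × ℝ} {u : ℝ → ℝ} {μ : ℝ}
    (heq : ∀ x ∈ Ioo 0 π, Tde p.1 p.2 u x + μ * u x = 0) :
    EqOn (perturbation p u) (fun x => deriv (deriv u) x + (μ - 3) * u x) (Ioo 0 π) := fun x hx => by
  linear_combination Tde_of_mem_Ioo p u hx - heq x hx

theorem intervalIntegrable_perturbation {p : ℝ × ℝ} {u : ℝ → ℝ} {μ : ℝ}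
    (hu : ∀ x ∈ Icc 0 π, ContDiffAt ℝ 2 u x)
    (heq : ∀ x ∈ Ioo 0 π, Tde p.1 p.2 u x + μ * u x = 0) :
    IntervalIntegrable (perturbation p u) volume 0 π := by
  rw [← uIcc_of_le pi_pos.le] at hu
  have hu_cont : ContinuousOn u [[0, π]] := fun x hx => (hu x hx).continuousAt.continuousWithinAt
  have hcont : ContinuousOn (fun x => deriv (deriv u) x + (μ - 3) * u x) [[0, π]] :=
    (continuousOn_deriv_deriv hu).add (continuousOn_const.mul hu_cont)
  refine hcont.intervalIntegrable.congr_uIoo ?_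
  simpa only [uIoo_of_le pi_pos.le] using (eqOn_perturbation heq).symm

theorem integral_perturbation_mul_sin {p : ℝ × ℝ} {u : ℝ → ℝ} {μ : ℝ}
    (hu : ∀ x ∈ Icc 0 π, ContDiffAt ℝ 2 u x) (hu_zero : u 0 = 0) (hu_pi : u π = 0)
    (heq : ∀ x ∈ Ioo 0 π, Tde p.1 p.2 u x + μ * u x = 0) :
    ∫ x in (0 : ℝ)..π, perturbation p u x * sin x = (μ - 4) * ∫ x in (0 : ℝ)..π, u x * sin x := by
  rw [← uIcc_of_le pi_pos.le] at hu
  calc ∫ x in (0 : ℝ)..π, perturbation p u x * sin x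
    _ = ∫ x in (0 : ℝ)..π, (deriv (deriv u) x + (μ - 3) * u x) * sin x :=
        intervalIntegral.integral_congr_Ioo_of_le pi_pos.le fun x hx => by
          simp only [eqOn_perturbation heq hx]
    _ = (μ - 3 - 1) * ∫ x in (0 : ℝ)..π, u x * sin x :=
        integral_deriv_deriv_add_mul_of_dirichlet hu (fun _ _ => contDiff_sin.contDiffAt)
          hu_zero hu_pi sin_zero sin_pi fun x _ => by simp
    _ = (μ - 4) * ∫ x in (0 : ℝ)..π, u x * sin x := by ring

theorem contDiffAt_invRadius (n : WithTop ℕ∞) (x : ℝ) :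
    ContDiffAt ℝ n (uncurry invRadius) (0, x) := by
  unfold uncurry invRadius
  exact ContDiffAt.div (by fun_prop) (by fun_prop) (by simp)

section Coefficients

variable {K : Set ℝ}

theorem isBigO_fst_fst {l : Filter ((ℝ × ℝ) × ℝ)} :
    (fun q : (ℝ × ℝ) × ℝ => q.1.1) =O[l] fun q => ‖q.1‖ :=
  isBigO_of_le _ fun q => (norm_fst_le q.1).trans (le_abs_self _)

theorem isBigO_potential_firstOrder (hK : IsCompact K) :
    (fun q : (ℝ × ℝ) × ℝ => 6 * (q.1.2 + q.1.1 * q.2)) =O[𝓝 0 ×ˢ 𝓟 K] fun q => ‖q.1‖ := by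
  simpa only [sub_zero] using isBigO_norm_fst_of_eq_zero (𝕜 := ℝ) (p₀ := (0 : ℝ × ℝ)) hK
    (f := fun q : (ℝ × ℝ) × ℝ => 6 * (q.1.2 + q.1.1 * q.2)) (by fun_prop) (by simp)

theorem isBigO_invRadius_sub_one (hK : IsCompact K) :
    (fun q => invRadius q.1 q.2 - 1) =O[𝓝 0 ×ˢ 𝓟 K] fun q => ‖q.1‖ := by
  simpa [uncurry, invRadius] using
    isBigO_sub_slice hK fun x _ => contDiffAt_invRadius 1 x

theorem eventually_radius_ne_zero (hK : IsCompact K) :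
    ∀ᶠ q : (ℝ × ℝ) × ℝ in 𝓝 0 ×ˢ 𝓟 K, 1 - q.1.1 * (1 + q.1.2) * q.2 ≠ 0 := by
  refine eventually_prod_principal_iff.2
    (hK.eventually_forall_of_forall_eventually fun x _ => ?_)
  exact ContinuousAt.eventually_ne (g := fun q : (ℝ × ℝ) × ℝ => 1 - q.1.1 * (1 + q.1.2) * q.2)
    (by fun_prop) (by simp)

theorem isBigO_invRadius_sub_firstOrder (hK : IsCompact K) :
    (fun q => invRadius q.1 q.2 - 1 - (q.1.2 + q.1.1 * q.2)) =O[𝓝 0 ×ˢ 𝓟 K]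
      fun q => ‖q.1‖ ^ 2 := by
  have hfactor : (fun q : (ℝ × ℝ) × ℝ => q.2 * ((1 + q.1.2) * invRadius q.1 q.2 - 1))
      =O[𝓝 0 ×ˢ 𝓟 K] fun q => ‖q.1‖ := by
    have hsmooth : ∀ x ∈ K, ContDiffAt ℝ 1
        (fun q : (ℝ × ℝ) × ℝ => q.2 * ((1 + q.1.2) * invRadius q.1 q.2 - 1)) (0, x) := by
      intro x _
      have hinv := contDiffAt_invRadius 1 x
      unfold uncurry at hinv
      fun_prop
    simpa only [sub_zero] using
      isBigO_norm_fst_of_eq_zero hK hsmooth fun x => by simp [invRadius]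
  -- With `A = invRadius`, clearing the denominator gives `A = (1 + ε) + η x (1 + ε) A`.
  have hresolvent : (fun q : (ℝ × ℝ) × ℝ =>
      q.1.1 * (q.2 * ((1 + q.1.2) * invRadius q.1 q.2 - 1)))
      =ᶠ[𝓝 0 ×ˢ 𝓟 K] fun q => invRadius q.1 q.2 - 1 - (q.1.2 + q.1.1 * q.2) := by
    filter_upwards [eventually_radius_ne_zero hK] with q hq
    have hcancel : invRadius q.1 q.2 * (1 - q.1.1 * (1 + q.1.2) * q.2) = 1 + q.1.2 :=
      div_mul_cancel₀ _ hq
    linear_combination -hcancel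
  simpa only [sq] using (isBigO_fst_fst.mul hfactor).congr' hresolvent .rfl

theorem isBigO_potential_sub_firstOrder (hK : IsCompact K) :
    (fun q => 3 * (invRadius q.1 q.2 ^ 2 - 1) - 6 * (q.1.2 + q.1.1 * q.2)) =O[𝓝 0 ×ˢ 𝓟 K]
      fun q => ‖q.1‖ ^ 2 := by
  have hlinear := (isBigO_invRadius_sub_firstOrder hK).const_mul_left 6
  have hquadratic := ((isBigO_invRadius_sub_one hK).pow 2).const_mul_left 3
  exact (hlinear.add hquadratic).congr_left fun q => by ring

theorem isBigO_drift_sub_firstOrder (hK : IsCompact K) :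
    (fun q : (ℝ × ℝ) × ℝ => q.1.1 * invRadius q.1 q.2 - q.1.1) =O[𝓝 0 ×ˢ 𝓟 K]
      fun q => ‖q.1‖ ^ 2 := by
  simpa only [sq, mul_sub, mul_one] using isBigO_fst_fst.mul (isBigO_invRadius_sub_one hK)

end Coefficients

section Branch

variable {Φ : ℝ × ℝ → ℝ → ℝ}

theorem isBigO_branch_sub_sin (hΦ : ∀ x ∈ Icc 0 π, ContDiffAt ℝ 1 (uncurry Φ) (0, x))
    (hΦ_zero : EqOn (Φ 0) sin (Icc 0 π)) :
    (fun q => Φ q.1 q.2 - sin q.2) =O[𝓝 0 ×ˢ 𝓟 (Ioo 0 π)] fun q => ‖q.1‖ := by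
  have hLip := (isBigO_sub_slice isCompact_Icc hΦ).mono
    (prod_mono_right _ (principal_mono.2 Ioo_subset_Icc_self))
  simp only [sub_zero] at hLip
  refine hLip.congr' ?_ .rfl
  filter_upwards [prod_mem_prod univ_mem (mem_principal_self _)] with q hq
  simp only [uncurry, hΦ_zero (Ioo_subset_Icc_self hq.2)]

theorem isBigO_deriv_branch_sub_cos (hΦ : ∀ x ∈ Icc 0 π, ContDiffAt ℝ 2 (uncurry Φ) (0, x))
    (hΦ_zero : EqOn (Φ 0) sin (Icc 0 π)) :
    (fun q => deriv (Φ q.1) q.2 - cos q.2) =O[𝓝 0 ×ˢ 𝓟 (Ioo 0 π)] fun q => ‖q.1‖ := by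
  have hLip := (isBigO_sub_slice isCompact_Icc
    fun x hx => contDiffAt_deriv_slice (hΦ x hx) (m := 1) (by norm_num)).mono
    (prod_mono_right _ (principal_mono.2 Ioo_subset_Icc_self))
  simp only [sub_zero] at hLip
  refine hLip.congr' ?_ .rfl
  filter_upwards [prod_mem_prod univ_mem (mem_principal_self _)] with q hq
  have hsin : Φ 0 =ᶠ[𝓝 q.2] sin :=
    hΦ_zero.eventuallyEq_of_mem (Icc_mem_nhds hq.2.1 hq.2.2)
  rw [hsin.deriv_eq, Real.deriv_sin]

theorem isBigO_perturbation_sub_linearPerturbation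
    (hΦ : ∀ x ∈ Icc 0 π, ContDiffAt ℝ 2 (uncurry Φ) (0, x))
    (hΦ_zero : EqOn (Φ 0) sin (Icc 0 π)) :
    (fun q => perturbation q.1 (Φ q.1) q.2 - linearPerturbation q.1 q.2)
      =O[𝓝 0 ×ˢ 𝓟 (Ioo 0 π)] fun q => ‖q.1‖ ^ 2 := by
  have hl : 𝓝 (0 : ℝ × ℝ) ×ˢ 𝓟 (Ioo 0 π) ≤ 𝓝 0 ×ˢ 𝓟 (Icc 0 π) :=
    prod_mono_right _ (principal_mono.2 Ioo_subset_Icc_self)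
  have hnorm : (fun q : (ℝ × ℝ) × ℝ => ‖q.1‖) =O[𝓝 0 ×ˢ 𝓟 (Ioo 0 π)] fun _ => (1 : ℝ) :=
    (tendsto_norm_zero.comp tendsto_fst).isBigO_one ℝ
  have hdrift := isBigO_mul_sub_mul hnorm
    (isBigO_of_le _ fun q => by simpa using abs_cos_le_one q.2)
    isBigO_fst_fst
    ((isBigO_drift_sub_firstOrder isCompact_Icc).mono hl)
    (isBigO_deriv_branch_sub_cos hΦ hΦ_zero)
  have hpotential := isBigO_mul_sub_mul hnorm
    (isBigO_of_le _ fun q => by simpa using abs_sin_le_one q.2)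
    ((isBigO_potential_firstOrder isCompact_Icc).mono hl)
    ((isBigO_potential_sub_firstOrder isCompact_Icc).mono hl)
    (isBigO_branch_sub_sin (fun x hx => (hΦ x hx).of_le one_le_two) hΦ_zero)
  refine (hdrift.add hpotential).congr_left fun q => ?_
  rw [perturbation, linearPerturbation]
  ring

theorem first_dirichlet_branch_first_order_general {U : Set (ℝ × ℝ)} (hU : U ∈ 𝓝 0)
    {Λ : ℝ × ℝ → ℝ} (hΦ : ∀ x ∈ Icc 0 π, ContDiffAt ℝ 2 (uncurry Φ) (0, x))
    (heq : ∀ p ∈ U, ∀ x ∈ Ioo 0 π, Tde p.1 p.2 (Φ p) x + Λ p * Φ p x = 0)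
    (hbc : ∀ p ∈ U, Φ p 0 = 0 ∧ Φ p π = 0)
    (hnorm : ∀ p ∈ U, ∫ x in (0 : ℝ)..π, Φ p x * sin x = π / 2)
    (hΦ_zero : EqOn (Φ 0) sin (Icc 0 π)) :
    (fun p => Λ p - 4 - 3 * π * p.1 - 6 * p.2) =O[𝓝 0] fun p => p.1 ^ 2 + p.2 ^ 2 := by
  have hsin : (fun q : (ℝ × ℝ) × ℝ => sin q.2) =O[𝓝 0 ×ˢ 𝓟 (Ioo 0 π)] fun _ => (1 : ℝ) :=
    isBigO_of_le _ fun q => by simpa using abs_sin_le_one q.2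
  have hremainder : (fun p => ∫ x in (0 : ℝ)..π,
      (perturbation p (Φ p) x - linearPerturbation p x) * sin x) =O[𝓝 0] fun p => ‖p‖ ^ 2 :=
    isBigO_intervalIntegral (g := fun p => ‖p‖ ^ 2) pi_pos.le <| by
      simpa only [mul_one] using (isBigO_perturbation_sub_linearPerturbation hΦ hΦ_zero).mul hsin
  have hsolvability : ∀ᶠ p in 𝓝 0, ∫ x in (0 : ℝ)..π,
      (perturbation p (Φ p) x - linearPerturbation p x) * sin x =
        π / 2 * (Λ p - 4 - 3 * π * p.1 - 6 * p.2) := by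
    filter_upwards [hU, eventually_contDiffAt_slice isCompact_Icc (by simp) hΦ] with p hp hΦp
    have hΦ_int : IntervalIntegrable (fun x => perturbation p (Φ p) x * sin x) volume 0 π :=
      (intervalIntegrable_perturbation hΦp (heq p hp)).mul_continuousOn continuousOn_sin
    have hlinear_int : IntervalIntegrable (fun x => linearPerturbation p x * sin x) volume 0 π :=
      ((continuous_linearPerturbation p).mul continuous_sin).intervalIntegrable _ _
    simp only [sub_mul]
    rw [intervalIntegral.integral_sub hΦ_int hlinear_int,
      integral_perturbation_mul_sin hΦp (hbc p hp).1 (hbc p hp).2 (heq p hp), hnorm p hp,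
      integral_linearPerturbation_mul_sin]
    ring
  have hnorm_sq : (fun p : ℝ × ℝ => ‖p‖ ^ 2) =O[𝓝 0] fun p => p.1 ^ 2 + p.2 ^ 2 :=
    isBigO_of_le _ fun p => by
      rw [norm_pow, norm_norm, Real.norm_of_nonneg (by positivity), Prod.norm_def]
      rcases max_cases ‖p.1‖ ‖p.2‖ with ⟨h, -⟩ | ⟨h, -⟩ <;> rw [h, Real.norm_eq_abs, sq_abs] <;>
        nlinarith [sq_nonneg p.1, sq_nonneg p.2]
  exact (isBigO_const_mul_left_iff (by positivity)).1
    ((hremainder.congr' hsolvability .rfl).trans hnorm_sq)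

end Branch

/-- First-order expansion of the first Dirichlet eigenvalue branch of
`T_{η,ε}`: `Λ(η,ε) = 4 + 3πη + 6ε + O(η² + ε²)`. -/
theorem first_dirichlet_branch_first_order
    (U : Set (ℝ × ℝ)) (hUopen : IsOpen U) (hU0 : (0, 0) ∈ U)
    (hUsub : U ⊆ {p : ℝ × ℝ | |p.1| + |p.2| < 1/100})
    (Λ : ℝ × ℝ → ℝ) (Φ : ℝ × ℝ → ℝ → ℝ)
    (hΛ : AnalyticOnNhd ℝ Λ U)
    (hΦ : AnalyticOnNhd ℝ (fun q : (ℝ × ℝ) × ℝ => Φ q.1 q.2) (U ×ˢ Set.Icc 0 π))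
    (heq : ∀ p ∈ U, ∀ x ∈ Set.Ioo (0:ℝ) π, Tde p.1 p.2 (Φ p) x + Λ p * Φ p x = 0)
    (hbc : ∀ p ∈ U, Φ p 0 = 0 ∧ Φ p π = 0)
    (hnorm : ∀ p ∈ U, ∫ x in (0:ℝ)..π, Φ p x * Real.sin x = π/2)
    (hΛ0 : Λ (0, 0) = 4)
    (hΦ0 : ∀ x ∈ Set.Icc (0:ℝ) π, Φ (0, 0) x = Real.sin x) :
    ∃ C > (0:ℝ), ∃ V ⊆ U, IsOpen V ∧ (0, 0) ∈ V ∧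
      ∀ p ∈ V, |Λ p - 4 - 3 * π * p.1 - 6 * p.2| ≤ C * (p.1^2 + p.2^2) :=
  exists_isOpen_forall_abs_le_of_isBigO (hUopen.mem_nhds hU0) (fun _ => by positivity) <|
    first_dirichlet_branch_first_order_general (hUopen.mem_nhds hU0)
      (fun x hx => (hΦ _ ⟨hU0, hx⟩).contDiffAt) heq hbc hnorm hΦ0

end
end

section
/- Let U be an open neighborhood of (0,0) in ℝ², and suppose ν : U → ℝ and Ψ : U × [0,π] → ℝ are real-analytic functions such that for every (η,δ) ∈ U: the function x ↦ Ψ(η,δ,x) satisfies T̃_{η,δ}Ψ(η,δ,·) + ν(η,δ)·Ψ(η,δ,·) = 0 on (0,π), ∂_x Ψ(η,δ,0) = ∂_x Ψ(η,δ,π) = 0, and the normalization ∫₀^π Ψ(η,δ,x) cos(2x) dx = π/2; and suppose ν(0,0) = 4 and Ψ(0,0,x) = cos(2x). Then there exist a constant C > 0 and a neighborhood V ⊆ U of (0,0) such that |ν(η,δ) − 4 − (3/4)η²| ≤ C(|η|³ + |δ|³) for all (η,δ) ∈ V. -/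
open Set Real

noncomputable section

/-- The operator `T̃_{η,δ}`, obtained from `T̃_{η,ε}` by the substitution
`ε = −(π/2)η(1+δ)`, with derivatives taken within `[0,π]`. -/
def Ttdd (η δ : ℝ) (u : ℝ → ℝ) (x : ℝ) : ℝ :=
  derivWithin (derivWithin u (Set.Icc 0 π)) (Set.Icc 0 π) x
    - (η * (1 - (π/2) * η * (1 + δ)) / (1 - η * (1 - (π/2) * η * (1 + δ)) * x))
        * derivWithin u (Set.Icc 0 π) x

/-!
With `a = η(1+ε)` and `w = 1 - a x`, the eigenvalue equation is `(w u')' = -ν w u`. The first-order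
corrected eigenfunction `φ = cos 2x + a (x/2 cos 2x - 1/4 sin 2x)` satisfies the Neumann conditions
and `(w φ')' = -4 w φ + 3 a² x sin 2x`, so Green's identity gives the exact relation
`(ν - 4) ∫ w φ Ψ = -3 a² ∫ x sin 2x Ψ`. Both integrals are Lipschitz in the parameters and equal
`π/2` and `-π/8` at the origin, while `a² = η² (1 + O(‖(η, δ)‖))`; hence
`ν - 4 = 3/4 η² (1 + O(‖(η, δ)‖))`.
-/

open Filter Topology Asymptotics

section Asymptotics

lemma isBigO_intervalIntegral_sub {E F : Type*} [NormedAddCommGroup E] [NormedSpace ℝ E]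
    [ProperSpace E] [NormedAddCommGroup F] [NormedSpace ℝ F] {f : E × ℝ → F} {U : Set E} {p₀ : E}
    {a b : ℝ} (hU : U ∈ 𝓝 p₀) (hf : ContDiffOn ℝ 1 f (U ×ˢ uIcc a b)) :
    (fun p => (∫ x in a..b, f (p, x)) - ∫ x in a..b, f (p₀, x)) =O[𝓝 p₀] fun p => p - p₀ := by
  obtain ⟨r, hr, hrU⟩ := Metric.nhds_basis_closedBall.mem_iff.1 hU
  obtain ⟨K, hK⟩ := (hf.mono (prod_mono hrU Subset.rfl)).exists_lipschitzOnWith one_ne_zero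
    ((convex_closedBall p₀ r).prod (convex_uIcc a b))
    ((isCompact_closedBall p₀ r).prod isCompact_uIcc)
  have integrable_slice : ∀ p ∈ Metric.closedBall p₀ r,
      IntervalIntegrable (fun x => f (p, x)) MeasureTheory.volume a b := fun p hp =>
    (hK.continuousOn.comp (by fun_prop) fun x hx => ⟨hp, hx⟩).intervalIntegrable
  have hp₀ : p₀ ∈ Metric.closedBall p₀ r := Metric.mem_closedBall_self hr.le
  refine IsBigO.of_bound (K * |b - a|) ?_
  filter_upwards [Metric.closedBall_mem_nhds p₀ hr] with p hp
  rw [← intervalIntegral.integral_sub (integrable_slice p hp) (integrable_slice p₀ hp₀),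
    mul_right_comm]
  refine intervalIntegral.norm_integral_le_of_norm_le_const fun x hx => ?_
  have hx' := uIoc_subset_uIcc hx
  simpa [Prod.norm_def] using hK.norm_sub_le (x := (p, x)) ⟨hp, hx'⟩ (y := (p₀, x)) ⟨hp₀, hx'⟩

lemma isBigO_sub_div_mul_of_mul_eq_mul {α 𝕜 : Type*} [NormedField 𝕜] {l : Filter α}
    {N G A S A₀ r : α → 𝕜} {g s : 𝕜} (hg : g ≠ 0) (hr : Tendsto r l (𝓝 0))
    (hNG : ∀ᶠ p in l, N p * G p = A p * S p)
    (hA : (fun p => A p - A₀ p) =O[l] fun p => A₀ p * r p)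
    (hG : (fun p => G p - g) =O[l] r) (hS : (fun p => S p - s) =O[l] r) :
    (fun p => N p - s / g * A₀ p) =O[l] fun p => A₀ p * r p := by
  have tendsto_G : Tendsto G l (𝓝 g) := tendsto_sub_nhds_zero_iff.1 (hG.trans_tendsto hr)
  have tendsto_S : Tendsto S l (𝓝 s) := tendsto_sub_nhds_zero_iff.1 (hS.trans_tendsto hr)
  have numerator : (fun p => (A p - A₀ p) * S p + A₀ p * (S p - s - s / g * (G p - g)))
      =O[l] fun p => A₀ p * r p := by
    refine IsBigO.add ?_ ((isBigO_refl A₀ l).mul (hS.sub (hG.const_mul_left (s / g))))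
    simpa using hA.mul (tendsto_S.isBigO_one 𝕜)
  have quotient := numerator.mul ((tendsto_G.inv₀ hg).isBigO_one 𝕜)
  simp only [mul_one] at quotient
  refine quotient.congr' ?_ EventuallyEq.rfl
  filter_upwards [hNG, tendsto_G.eventually_ne hg] with p hp hGp
  field_simp
  linear_combination (-g) * hp

lemma exists_isOpen_forall_norm_le_of_isBigO {X E : Type*} [TopologicalSpace X]
    [SeminormedAddCommGroup E] {f : X → E} {g : X → ℝ} {x : X} {U : Set X} (hU : U ∈ 𝓝 x)
    (h : f =O[𝓝 x] g) (hg : ∀ p, 0 ≤ g p) :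
    ∃ C > (0 : ℝ), ∃ V ⊆ U, IsOpen V ∧ x ∈ V ∧ ∀ p ∈ V, ‖f p‖ ≤ C * g p := by
  obtain ⟨C, hC, hbound⟩ := h.exists_pos
  obtain ⟨V, hV, hVo, hxV⟩ := eventually_nhds_iff.1 (hbound.bound.and hU)
  refine ⟨C, hC, V, fun p hp => (hV p hp).2, hVo, hxV, fun p hp => ?_⟩
  simpa only [norm_of_nonneg (hg p)] using (hV p hp).1

lemma norm_fst_sq_mul_norm_le (p : ℝ × ℝ) :
    ‖p.1 ^ 2 * ‖p‖‖ ≤ ‖|p.1| ^ 3 + |p.2| ^ 3‖ := by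
  have norm_pow_three_le : ‖p‖ ^ 3 ≤ |p.1| ^ 3 + |p.2| ^ 3 := by
    rw [Prod.norm_def, norm_eq_abs, norm_eq_abs]
    rcases max_choice |p.1| |p.2| with h | h <;> rw [h] <;> simp
  calc ‖p.1 ^ 2 * ‖p‖‖ = ‖p.1‖ ^ 2 * ‖p‖ := by rw [norm_mul, norm_pow, norm_norm]
    _ ≤ ‖p‖ ^ 2 * ‖p‖ := by gcongr; exact norm_fst_le p
    _ = ‖p‖ ^ 3 := by ring
    _ ≤ |p.1| ^ 3 + |p.2| ^ 3 := norm_pow_three_le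
    _ ≤ ‖|p.1| ^ 3 + |p.2| ^ 3‖ := le_norm_self _

end Asymptotics

section SturmLiouville

lemma hasDerivAt_derivWithin_Icc {E : Type*} [NormedAddCommGroup E] [NormedSpace ℝ E] {f : ℝ → E}
    {a b x : ℝ} (hf : DifferentiableOn ℝ f (Icc a b)) (hx : x ∈ Ioo a b) :
    HasDerivAt f (derivWithin f (Icc a b) x) x :=
  (hf x (Ioo_subset_Icc_self hx)).hasDerivWithinAt.hasDerivAt (Icc_mem_nhds hx.1 hx.2)

lemma integral_mul_deriv_flux_sub_mul_deriv_flux {a b : ℝ} (hab : a ≤ b)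
    {w u u' v v' P Q : ℝ → ℝ}
    (hu : ContinuousOn u (Icc a b)) (hv : ContinuousOn v (Icc a b))
    (hwu' : ContinuousOn (fun x => w x * u' x) (Icc a b))
    (hwv' : ContinuousOn (fun x => w x * v' x) (Icc a b))
    (hdu : ∀ x ∈ Ioo a b, HasDerivAt u (u' x) x) (hdv : ∀ x ∈ Ioo a b, HasDerivAt v (v' x) x)
    (hP : ∀ x ∈ Ioo a b, HasDerivAt (fun x => w x * u' x) (P x) x)
    (hQ : ∀ x ∈ Ioo a b, HasDerivAt (fun x => w x * v' x) (Q x) x)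
    (hint : IntervalIntegrable (fun x => v x * P x - u x * Q x) MeasureTheory.volume a b) :
    ∫ x in a..b, (v x * P x - u x * Q x) =
      w b * (v b * u' b - u b * v' b) - w a * (v a * u' a - u a * v' a) := by
  rw [intervalIntegral.integral_eq_sub_of_hasDerivAt_of_le hab
    (f := fun x => v x * (w x * u' x) - u x * (w x * v' x))
    ((hv.mul hwu').sub (hu.mul hwv')) (fun x hx => ?_) hint]
  · ring
  · refine (((hdv x hx).mul (hP x hx)).sub ((hdu x hx).mul (hQ x hx))).congr_deriv ?_
    ring

lemma hasDerivAt_one_sub_mul_mul_of_eigen_eq {a n x y u'' : ℝ} {u' : ℝ → ℝ}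
    (hx : 1 - a * x ≠ 0) (hu' : HasDerivAt u' u'' x)
    (heq : u'' - a / (1 - a * x) * u' x + n * y = 0) :
    HasDerivAt (fun x => (1 - a * x) * u' x) (-n * ((1 - a * x) * y)) x := by
  refine (((hasDerivAt_const_mul a).const_sub 1).mul hu').congr_deriv ?_
  field_simp at heq
  linear_combination heq

/-- The approximation, to first order in `a`, of the third Neumann eigenfunction of
`u'' - a / (1 - a x) u'` on `[0, π]`, with the correction chosen so that the Neumann conditions
hold exactly. -/
def approxEigenfunction (a x : ℝ) : ℝ :=
  cos (2 * x) + a * (x / 2 * cos (2 * x) - sin (2 * x) / 4)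

lemma hasDerivAt_approxEigenfunction (a x : ℝ) :
    HasDerivAt (approxEigenfunction a) (-(2 + a * x) * sin (2 * x)) x := by
  have h2 := hasDerivAt_const_mul (2 : ℝ) (x := x)
  refine (h2.cos.add (((((hasDerivAt_id x).div_const 2).mul h2.cos).sub
    (h2.sin.div_const 4)).const_mul a)).congr_deriv ?_
  simp only [id]
  ring

lemma hasDerivAt_flux_approxEigenfunction (a x : ℝ) :
    HasDerivAt (fun x => (1 - a * x) * (-(2 + a * x) * sin (2 * x)))
      (-4 * ((1 - a * x) * approxEigenfunction a x) + 3 * a ^ 2 * (x * sin (2 * x))) x := by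
  have h2 := hasDerivAt_const_mul (2 : ℝ) (x := x)
  refine (((hasDerivAt_const_mul a).const_sub 1).mul
    (((hasDerivAt_const_mul a).const_add 2).neg.mul h2.sin)).congr_deriv ?_
  simp only [approxEigenfunction, Pi.mul_apply, Pi.neg_apply]
  ring

@[fun_prop]
lemma contDiff_approxEigenfunction {n : WithTop ℕ∞} :
    ContDiff ℝ n fun q : ℝ × ℝ => approxEigenfunction q.1 q.2 := by
  unfold approxEigenfunction
  fun_prop

lemma sub_four_mul_integral_eq {a n : ℝ} {u : ℝ → ℝ} (ha : ∀ x ∈ Ioo 0 π, 1 - a * x ≠ 0)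
    (hu : ContDiffOn ℝ 2 u (Icc 0 π))
    (heq : ∀ x ∈ Ioo 0 π, derivWithin (derivWithin u (Icc 0 π)) (Icc 0 π) x
      - a / (1 - a * x) * derivWithin u (Icc 0 π) x + n * u x = 0)
    (h0 : derivWithin u (Icc 0 π) 0 = 0) (hπ : derivWithin u (Icc 0 π) π = 0) :
    (n - 4) * ∫ x in 0..π, (1 - a * x) * approxEigenfunction a x * u x =
      a ^ 2 * (-3 * ∫ x in 0..π, x * sin (2 * x) * u x) := by
  have hu' : ContDiffOn ℝ 1 (derivWithin u (Icc 0 π)) (Icc 0 π) :=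
    hu.derivWithin (uniqueDiffOn_Icc pi_pos) (by norm_num)
  have hcu := hu.continuousOn
  have hcu' := hu'.continuousOn
  have hcφ : Continuous (approxEigenfunction a) :=
    continuous_iff_continuousAt.2 fun x => (hasDerivAt_approxEigenfunction a x).continuousAt
  have integrable {f : ℝ → ℝ} (hf : ContinuousOn f (Icc 0 π)) :
      IntervalIntegrable f MeasureTheory.volume 0 π :=
    hf.intervalIntegrable_of_Icc pi_pos.le
  have green := integral_mul_deriv_flux_sub_mul_deriv_flux pi_pos.le
    (w := fun x => 1 - a * x) hcφ.continuousOn hcu (by fun_prop) (by fun_prop)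
    (fun x _ => hasDerivAt_approxEigenfunction a x)
    (fun x hx => hasDerivAt_derivWithin_Icc (hu.differentiableOn two_ne_zero) hx)
    (fun x _ => hasDerivAt_flux_approxEigenfunction a x)
    (fun x hx => hasDerivAt_one_sub_mul_mul_of_eigen_eq (ha x hx)
      (hasDerivAt_derivWithin_Icc (hu'.differentiableOn one_ne_zero) hx) (heq x hx))
    (integrable (by fun_prop))
  rw [← sub_eq_zero, ← intervalIntegral.integral_const_mul, ← intervalIntegral.integral_const_mul,
    ← intervalIntegral.integral_const_mul, ← intervalIntegral.integral_sub
      (integrable (by fun_prop)) (integrable (by fun_prop))]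
  calc ∫ x in 0..π, ((n - 4) * ((1 - a * x) * approxEigenfunction a x * u x) -
        a ^ 2 * (-3 * (x * sin (2 * x) * u x)))
      = ∫ x in 0..π, (u x * (-4 * ((1 - a * x) * approxEigenfunction a x) +
          3 * a ^ 2 * (x * sin (2 * x))) -
        approxEigenfunction a x * (-n * ((1 - a * x) * u x))) := by congr 1 with x; ring
    _ = 0 := by rw [green, h0, hπ]; simp

lemma integral_cos_two_mul_sq : ∫ x in 0..π, cos (2 * x) ^ 2 = π / 2 := by
  rw [intervalIntegral.integral_comp_mul_left (fun x => cos x ^ 2) two_ne_zero, integral_cos_sq]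
  simp only [mul_zero, cos_two_pi, sin_two_pi, cos_zero, sin_zero, smul_eq_mul]
  ring

lemma integral_mul_sin_two_mul_mul_cos_two_mul :
    ∫ x in 0..π, x * sin (2 * x) * cos (2 * x) = -(π / 8) := by
  have antideriv (x : ℝ) : HasDerivAt
      (fun x => 8⁻¹ * x + 16⁻¹ * (sin (2 * x) * cos (2 * x)) - 4⁻¹ * (x * cos (2 * x) ^ 2))
      (x * sin (2 * x) * cos (2 * x)) x := by
    have h2 := hasDerivAt_const_mul (2 : ℝ) (x := x)
    refine (((hasDerivAt_const_mul 8⁻¹).add ((h2.sin.mul h2.cos).const_mul 16⁻¹)).sub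
      (((hasDerivAt_id x).mul (h2.cos.pow 2)).const_mul 4⁻¹)).congr_deriv ?_
    simp only [id, Pi.pow_apply]
    linear_combination (-1 / 8) * sin_sq_add_cos_sq (2 * x)
  rw [intervalIntegral.integral_eq_sub_of_hasDerivAt (fun x _ => antideriv x)
    (by apply Continuous.intervalIntegrable; fun_prop)]
  simp only [mul_zero, cos_two_pi, sin_two_pi, cos_zero, sin_zero]
  ring

end SturmLiouville

section Branch

/-- The coefficient `η(1+ε)` of `T̃_{η,ε}` at `ε = −(π/2)η(1+δ)`, as a function of `p = (η, δ)`. -/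
def driftCoeff (p : ℝ × ℝ) : ℝ := p.1 * (1 - π / 2 * p.1 * (1 + p.2))

@[fun_prop]
lemma contDiff_driftCoeff {n : WithTop ℕ∞} : ContDiff ℝ n driftCoeff := by
  unfold driftCoeff
  fun_prop

lemma driftCoeff_zero : driftCoeff 0 = 0 := by simp [driftCoeff]

lemma isBigO_driftCoeff_sq_sub :
    (fun p => driftCoeff p ^ 2 - p.1 ^ 2) =O[𝓝 0] fun p => p.1 ^ 2 * ‖p‖ := by
  have relative_error : (fun p : ℝ × ℝ => (1 - π / 2 * p.1 * (1 + p.2)) ^ 2 - 1)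
      =O[𝓝 0] fun p => ‖p‖ := by
    have hdiff : DifferentiableAt ℝ (fun p : ℝ × ℝ => (1 - π / 2 * p.1 * (1 + p.2)) ^ 2) 0 := by
      fun_prop
    simpa using hdiff.isBigO_sub.norm_right
  refine ((isBigO_refl (fun p : ℝ × ℝ => p.1 ^ 2) (𝓝 0)).mul relative_error).congr_left fun p => ?_
  rw [driftCoeff]
  ring

lemma eventually_one_sub_driftCoeff_mul_ne_zero {K : Set ℝ} (hK : IsCompact K) :
    ∀ᶠ p in 𝓝 0, ∀ x ∈ K, 1 - driftCoeff p * x ≠ 0 := by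
  have hcont : Continuous driftCoeff := (contDiff_driftCoeff (n := 0)).continuous
  refine hK.eventually_forall_of_forall_eventually fun x _ => ContinuousAt.eventually_ne
    (g := fun q : (ℝ × ℝ) × ℝ => 1 - driftCoeff q.1 * q.2) (by fun_prop) ?_
  simp only [driftCoeff_zero, zero_mul, sub_zero, ne_eq, one_ne_zero, not_false_eq_true]

variable {U : Set (ℝ × ℝ)} {Ψ : ℝ × ℝ → ℝ → ℝ}

lemma isBigO_integral_approxEigenfunction_mul_sub (hU : U ∈ 𝓝 0)
    (hΨ : ContDiffOn ℝ 1 (fun q : (ℝ × ℝ) × ℝ => Ψ q.1 q.2) (U ×ˢ Icc 0 π))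
    (hΨ0 : ∀ x ∈ Icc 0 π, Ψ 0 x = cos (2 * x)) :
    (fun p => (∫ x in 0..π, (1 - driftCoeff p * x) * approxEigenfunction (driftCoeff p) x * Ψ p x)
      - π / 2) =O[𝓝 0] fun p => ‖p‖ := by
  rw [← uIcc_of_le pi_pos.le] at hΨ hΨ0
  have value_at_zero : ∫ x in 0..π,
      (1 - driftCoeff 0 * x) * approxEigenfunction (driftCoeff 0) x * Ψ 0 x = π / 2 := by
    rw [← integral_cos_two_mul_sq]
    refine intervalIntegral.integral_congr fun x hx => ?_
    simp [driftCoeff_zero, approxEigenfunction, hΨ0 x hx, sq]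
  have lipschitz := isBigO_intervalIntegral_sub hU (f := fun q : (ℝ × ℝ) × ℝ =>
    (1 - driftCoeff q.1 * q.2) * approxEigenfunction (driftCoeff q.1) q.2 * Ψ q.1 q.2)
    (ContDiffOn.mul (by fun_prop) hΨ)
  simpa only [value_at_zero, sub_zero] using lipschitz.norm_right

lemma isBigO_integral_mul_sin_two_mul_mul_sub (hU : U ∈ 𝓝 0)
    (hΨ : ContDiffOn ℝ 1 (fun q : (ℝ × ℝ) × ℝ => Ψ q.1 q.2) (U ×ˢ Icc 0 π))
    (hΨ0 : ∀ x ∈ Icc 0 π, Ψ 0 x = cos (2 * x)) :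
    (fun p => (∫ x in 0..π, x * sin (2 * x) * Ψ p x) - -(π / 8)) =O[𝓝 0] fun p => ‖p‖ := by
  rw [← uIcc_of_le pi_pos.le] at hΨ hΨ0
  have value_at_zero : ∫ x in 0..π, x * sin (2 * x) * Ψ 0 x = -(π / 8) := by
    rw [← integral_mul_sin_two_mul_mul_cos_two_mul]
    exact intervalIntegral.integral_congr fun x hx => by simp only [hΨ0 x hx]
  have lipschitz := isBigO_intervalIntegral_sub hU (f := fun q : (ℝ × ℝ) × ℝ =>
    q.2 * sin (2 * q.2) * Ψ q.1 q.2) (ContDiffOn.mul (by fun_prop) hΨ)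
  simpa only [value_at_zero, sub_zero] using lipschitz.norm_right

theorem third_neumann_branch_second_order_general {ν : ℝ × ℝ → ℝ} (hU : U ∈ 𝓝 0)
    (hΨ : ContDiffOn ℝ 2 (fun q : (ℝ × ℝ) × ℝ => Ψ q.1 q.2) (U ×ˢ Icc 0 π))
    (heq : ∀ p ∈ U, ∀ x ∈ Ioo 0 π, Ttdd p.1 p.2 (Ψ p) x + ν p * Ψ p x = 0)
    (hbc : ∀ p ∈ U, derivWithin (Ψ p) (Icc 0 π) 0 = 0 ∧ derivWithin (Ψ p) (Icc 0 π) π = 0)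
    (hΨ0 : ∀ x ∈ Icc 0 π, Ψ 0 x = cos (2 * x)) :
    (fun p => ν p - 4 - 3 / 4 * p.1 ^ 2) =O[𝓝 0] fun p => p.1 ^ 2 * ‖p‖ := by
  have hΨ1 := hΨ.of_le one_le_two
  have eigenvalue_relation : ∀ᶠ p in 𝓝 0,
      (ν p - 4) * ∫ x in 0..π,
        (1 - driftCoeff p * x) * approxEigenfunction (driftCoeff p) x * Ψ p x =
      driftCoeff p ^ 2 * (-3 * ∫ x in 0..π, x * sin (2 * x) * Ψ p x) := by
    filter_upwards [hU, eventually_one_sub_driftCoeff_mul_ne_zero isCompact_Icc] with p hp hne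
    exact sub_four_mul_integral_eq (fun x hx => hne x (Ioo_subset_Icc_self hx))
      (hΨ.comp (contDiff_prodMk_right p).contDiffOn fun x hx => ⟨hp, hx⟩)
      (heq p hp) (hbc p hp).1 (hbc p hp).2
  have expansion := isBigO_sub_div_mul_of_mul_eq_mul (by positivity)
    (tendsto_norm_zero (E := ℝ × ℝ)) eigenvalue_relation isBigO_driftCoeff_sq_sub
    (isBigO_integral_approxEigenfunction_mul_sub hU hΨ1 hΨ0)
    (by simpa only [mul_sub] using
      (isBigO_integral_mul_sin_two_mul_mul_sub hU hΨ1 hΨ0).const_mul_left (-3))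
  rwa [show -3 * -(π / 8) / (π / 2) = 3 / 4 by field_simp; norm_num] at expansion

end Branch

/-- Second-order expansion of the third Neumann eigenvalue branch of
`T̃_{η,δ}`: `ν(η,δ) = 4 + (3/4)η² + O(|η|³ + |δ|³)`. -/
theorem third_neumann_branch_second_order
    (U : Set (ℝ × ℝ)) (hUopen : IsOpen U) (hU0 : (0, 0) ∈ U)
    (ν : ℝ × ℝ → ℝ) (Ψ : ℝ × ℝ → ℝ → ℝ)
    (hν : AnalyticOnNhd ℝ ν U)
    (hΨ : AnalyticOnNhd ℝ (fun q : (ℝ × ℝ) × ℝ => Ψ q.1 q.2) (U ×ˢ Set.Icc 0 π))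
    (heq : ∀ p ∈ U, ∀ x ∈ Set.Ioo (0:ℝ) π, Ttdd p.1 p.2 (Ψ p) x + ν p * Ψ p x = 0)
    (hbc : ∀ p ∈ U, derivWithin (Ψ p) (Set.Icc 0 π) 0 = 0 ∧
      derivWithin (Ψ p) (Set.Icc 0 π) π = 0)
    (hnorm : ∀ p ∈ U, ∫ x in (0:ℝ)..π, Ψ p x * Real.cos (2*x) = π/2)
    (hν0 : ν (0, 0) = 4)
    (hΨ0 : ∀ x ∈ Set.Icc (0:ℝ) π, Ψ (0, 0) x = Real.cos (2*x)) :
    ∃ C > (0:ℝ), ∃ V ⊆ U, IsOpen V ∧ (0, 0) ∈ V ∧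
      ∀ p ∈ V, |ν p - 4 - (3/4) * p.1^2| ≤ C * (|p.1|^3 + |p.2|^3) := by
  exact exists_isOpen_forall_norm_le_of_isBigO (hUopen.mem_nhds hU0)
    ((third_neumann_branch_second_order_general (hUopen.mem_nhds hU0)
      hΨ.contDiffOn_of_completeSpace heq hbc hΨ0).trans (isBigO_of_le _ norm_fst_sq_mul_norm_le))
    fun p => by positivity

end
end
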